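/- arXiv:2011.12027 — 5 statements merged into one kernel-verified Lean document; each statement's English description precedes it below -/
import Mathlib

section
/- Let y : [0, τ] → [0, π] be defined by y(x) = arccos(1 − F(x)). Then y is twice differentiable on (0, τ) with y''(x) > 0 for all x ∈ (0, τ) (so y is convex there), y'(x) → +∞ as x → τ⁻, and there exists a constant C ≥ 0 such that x²/(2√3) ≤ y(x) ≤ x²/(2√3) + C·x⁴ for all x ∈ [0, τ]. -/
/-- `F t = 1 - cosh t + (t/2) * sinh t`. -/
noncomputable def F (t : ℝ) : ℝ := 1 - Real.cosh t + t / 2 * Real.sinh t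

/-- The function `y x = arccos (1 - F x)`, parametrizing the boundary curve
`{(x, y) : 1 - cos y = F x}` of the boundedness region. -/
noncomputable def yFun (x : ℝ) : ℝ := Real.arccos (1 - F x)

theorem bcs_nonneg {f f' : ℝ → ℝ} {b : ℝ} (h0 : f 0 = 0) (hd : ∀ x, HasDerivAt f (f' x) x)
    (hp : ∀ x, 0 ≤ x → x ≤ b → 0 ≤ f' x) : ∀ x, 0 ≤ x → x ≤ b → 0 ≤ f x := by
  intro x hx hxb
  have hm : MonotoneOn f (Set.Icc 0 b) := by
    apply monotoneOn_of_deriv_nonneg (convex_Icc 0 b)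
    · exact fun y _ => (hd y).continuousAt.continuousWithinAt
    · exact fun y _ => (hd y).differentiableAt.differentiableWithinAt
    · intro y hy
      rw [interior_Icc] at hy
      rw [(hd y).deriv]
      exact hp y hy.1.le hy.2.le
  have := hm (Set.left_mem_Icc.2 (hx.trans hxb)) ⟨hx, hxb⟩ hx
  linarith

theorem bcs_strict {f f' : ℝ → ℝ} (hd : ∀ x, HasDerivAt f (f' x) x)
    (hp : ∀ x, 0 < x → 0 < f' x) : StrictMonoOn f (Set.Ici 0) := by
  apply strictMonoOn_of_deriv_pos (convex_Ici 0)
  · exact fun y _ => (hd y).continuousAt.continuousWithinAt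
  · intro y hy
    rw [interior_Ici] at hy
    rw [(hd y).deriv]
    exact hp y hy

theorem bcs_pos {f f' : ℝ → ℝ} (h0 : f 0 = 0) (hd : ∀ x, HasDerivAt f (f' x) x)
    (hp : ∀ x, 0 < x → 0 < f' x) : ∀ x, 0 < x → 0 < f x := by
  intro x hx
  have := bcs_strict hd hp (Set.mem_Ici.2 le_rfl) (Set.mem_Ici.2 hx.le) hx
  linarith

noncomputable def bcsF1 (t : ℝ) : ℝ := (t * Real.cosh t - Real.sinh t) / 2
noncomputable def bcsF2 (t : ℝ) : ℝ := t * Real.sinh t / 2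
noncomputable def bcsF3 (t : ℝ) : ℝ := (Real.sinh t + t * Real.cosh t) / 2

theorem bcs_d0 (x : ℝ) : HasDerivAt F (bcsF1 x) x := by
  have h := ((Real.hasDerivAt_cosh x).const_sub 1).add
    (((hasDerivAt_id x).div_const 2).mul (Real.hasDerivAt_sinh x))
  refine h.congr_deriv ?_
  simp only [bcsF1, id]; ring

theorem bcs_d1 (x : ℝ) : HasDerivAt bcsF1 (bcsF2 x) x := by
  have h := (((hasDerivAt_id x).mul (Real.hasDerivAt_cosh x)).sub (Real.hasDerivAt_sinh x)).div_const 2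
  refine h.congr_deriv ?_
  simp only [bcsF2, id]; ring

theorem bcs_d2 (x : ℝ) : HasDerivAt bcsF2 (bcsF3 x) x := by
  have h := ((hasDerivAt_id x).mul (Real.hasDerivAt_sinh x)).div_const 2
  refine h.congr_deriv ?_
  simp only [bcsF3, id]; ring

theorem bcs_F0 : F 0 = 0 := by simp [F]
theorem bcs_F10 : bcsF1 0 = 0 := by simp [bcsF1]
theorem bcs_F20 : bcsF2 0 = 0 := by simp [bcsF2]

theorem bcs_F2pos (x : ℝ) (hx : 0 < x) : 0 < bcsF2 x := by
  have := Real.sinh_pos_iff.2 hx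
  unfold bcsF2; positivity

theorem bcs_F3pos (x : ℝ) (hx : 0 < x) : 0 < bcsF3 x := by
  have := Real.sinh_pos_iff.2 hx
  have := Real.cosh_pos x
  unfold bcsF3; positivity

theorem bcs_F1pos : ∀ x : ℝ, 0 < x → 0 < bcsF1 x := bcs_pos bcs_F10 bcs_d1 bcs_F2pos
theorem bcs_Fpos : ∀ x : ℝ, 0 < x → 0 < F x := bcs_pos bcs_F0 bcs_d0 bcs_F1pos

theorem bcs_H : ∀ x : ℝ, 0 < x → 0 < 2 * F x * bcsF2 x - bcsF1 x ^ 2 := by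
  apply bcs_pos (f := fun x => 2 * F x * bcsF2 x - bcsF1 x ^ 2) (f' := fun x => 2 * F x * bcsF3 x)
  · simp [bcs_F0, bcs_F10]
  · intro x
    have h := (((bcs_d0 x).const_mul 2).mul (bcs_d2 x)).sub ((bcs_d1 x).pow 2)
    refine h.congr_deriv ?_
    push_cast; ring
  · intro x hx
    have := bcs_Fpos x hx
    have := bcs_F3pos x hx
    positivity

theorem bcs_Ftau (τ : ℝ) (hτpos : 0 < τ)
    (hτ : Real.cosh (τ / 2) / Real.sinh (τ / 2) = τ / 2) : F τ = 2 := by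
  have hs : 0 < Real.sinh (τ / 2) := Real.sinh_pos_iff.2 (by linarith)
  rw [div_eq_iff hs.ne'] at hτ
  have h1 : Real.cosh τ = 2 * Real.cosh (τ / 2) ^ 2 - 1 := by
    have := Real.cosh_two_mul (τ / 2)
    have h2 := Real.cosh_sq (τ / 2)
    rw [mul_div_cancel₀ τ (two_ne_zero)] at this
    linarith
  have h2 : Real.sinh τ = 2 * Real.sinh (τ / 2) * Real.cosh (τ / 2) := by
    have := Real.sinh_two_mul (τ / 2)
    rwa [mul_div_cancel₀ τ (two_ne_zero)] at this
  unfold F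
  rw [h1, h2]
  linear_combination (-2 * Real.cosh (τ / 2)) * hτ

theorem bcs_Flt {τ x : ℝ} (hx : 0 ≤ x) (h : x < τ) (hF : F τ = 2) : F x < 2 := by
  have := bcs_strict bcs_d0 bcs_F1pos (Set.mem_Ici.2 hx) (Set.mem_Ici.2 (hx.trans h.le)) h
  linarith

theorem bcs_sinh_lower (b : ℝ) : ∀ x : ℝ, 0 ≤ x → x ≤ b → 0 ≤ Real.sinh x - x := by
  apply bcs_nonneg (f' := fun x => Real.cosh x - 1)
  · simp
  · exact fun x => (Real.hasDerivAt_sinh x).sub (hasDerivAt_id x)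
  · intro x _ _
    linarith [Real.one_le_cosh x]

theorem bcs_F_lower (b : ℝ) : ∀ x : ℝ, 0 ≤ x → x ≤ b → 0 ≤ F x - x ^ 4 / 24 := by
  apply bcs_nonneg (f' := fun x => bcsF1 x - x ^ 3 / 6)
  · simp [bcs_F0]
  · intro x
    refine ((bcs_d0 x).sub ((hasDerivAt_pow 4 x).div_const 24)).congr_deriv ?_
    push_cast; ring
  · apply bcs_nonneg (f' := fun x => bcsF2 x - x ^ 2 / 2)
    · simp [bcs_F10]
    · intro x
      refine ((bcs_d1 x).sub ((hasDerivAt_pow 3 x).div_const 6)).congr_deriv ?_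
      push_cast; ring
    · intro x hx hb
      have := mul_nonneg hx (bcs_sinh_lower b x hx hb)
      unfold bcsF2; nlinarith

theorem bcs_sinh_upper (b : ℝ) :
    ∀ x : ℝ, 0 ≤ x → x ≤ b → 0 ≤ x + Real.cosh b * x ^ 3 / 6 - Real.sinh x := by
  apply bcs_nonneg (f' := fun x => 1 + Real.cosh b * x ^ 2 / 2 - Real.cosh x)
  · simp
  · intro x
    refine (((hasDerivAt_id x).add (((hasDerivAt_pow 3 x).const_mul (Real.cosh b)).div_const 6)).sub
      (Real.hasDerivAt_sinh x)).congr_deriv ?_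
    push_cast; ring
  · apply bcs_nonneg (f' := fun x => Real.cosh b * x - Real.sinh x)
    · simp
    · intro x
      refine (((((hasDerivAt_pow 2 x).const_mul (Real.cosh b)).div_const 2).const_add 1).sub
        (Real.hasDerivAt_cosh x)).congr_deriv ?_
      push_cast; ring
    · apply bcs_nonneg (f' := fun x => Real.cosh b - Real.cosh x)
      · simp
      · intro x
        refine (((hasDerivAt_id x).const_mul (Real.cosh b)).sub
          (Real.hasDerivAt_sinh x)).congr_deriv ?_
        ring
      · intro x hx hb
        have : Real.cosh x ≤ Real.cosh b := by
          rw [Real.cosh_le_cosh, abs_of_nonneg hx, abs_of_nonneg (hx.trans hb)]; exact hb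
        linarith

theorem bcs_F_upper (b : ℝ) :
    ∀ x : ℝ, 0 ≤ x → x ≤ b → 0 ≤ x ^ 4 / 24 + Real.cosh b * x ^ 6 / 360 - F x := by
  apply bcs_nonneg (f' := fun x => x ^ 3 / 6 + Real.cosh b * x ^ 5 / 60 - bcsF1 x)
  · simp [bcs_F0]
  · intro x
    refine ((((hasDerivAt_pow 4 x).div_const 24).add
      (((hasDerivAt_pow 6 x).const_mul (Real.cosh b)).div_const 360)).sub
      (bcs_d0 x)).congr_deriv ?_
    push_cast; ring
  · apply bcs_nonneg (f' := fun x => x ^ 2 / 2 + Real.cosh b * x ^ 4 / 12 - bcsF2 x)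
    · simp [bcs_F10]
    · intro x
      refine ((((hasDerivAt_pow 3 x).div_const 6).add
        (((hasDerivAt_pow 5 x).const_mul (Real.cosh b)).div_const 60)).sub
        (bcs_d1 x)).congr_deriv ?_
      push_cast; ring
    · intro x hx hb
      have := mul_nonneg hx (bcs_sinh_upper b x hx hb)
      unfold bcsF2; nlinarith

theorem bcs_dy {x : ℝ} (h0 : 0 < F x) (h2 : F x < 2) :
    HasDerivAt yFun (bcsF1 x / Real.sqrt (F x * (2 - F x))) x := by
  have h := (Real.hasDerivAt_arccos (x := 1 - F x) (by linarith) (by linarith)).comp x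
    ((bcs_d0 x).const_sub 1)
  refine h.congr_deriv ?_
  rw [show 1 - (1 - F x) ^ 2 = F x * (2 - F x) by ring]
  ring

theorem bcs_ddy {x : ℝ} (hx : 0 < x) (h2 : F x < 2) :
    ∃ d, 0 < d ∧ HasDerivAt (fun x => bcsF1 x / Real.sqrt (F x * (2 - F x))) d x := by
  have h0 := bcs_Fpos x hx
  have hQ : 0 < F x * (2 - F x) := mul_pos h0 (by linarith)
  have hs := Real.sqrt_pos.2 hQ
  have h := (bcs_d1 x).div (((bcs_d0 x).mul ((bcs_d0 x).const_sub 2)).sqrt hQ.ne') hs.ne'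
  refine ⟨_, ?_, h⟩
  apply div_pos _ (by positivity)
  simp only [Pi.mul_apply]
  have hsq := Real.sq_sqrt hQ.le
  set s := Real.sqrt (F x * (2 - F x)) with hsdef
  have key : 0 < bcsF2 x * (F x * (2 - F x)) - bcsF1 x ^ 2 * (1 - F x) := by
    have hF2 := bcs_F2pos x hx
    have hH := bcs_H x hx
    have hF1 := bcs_F1pos x hx
    by_cases hc : F x < 1
    · have a := mul_pos hH (by linarith : 0 < 1 - F x)
      have b := mul_pos hF2 (mul_pos h0 h0)
      nlinarith
    · have a := mul_pos hF2 hQ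
      have b : 0 ≤ bcsF1 x ^ 2 * (F x - 1) := mul_nonneg (by positivity) (by linarith)
      nlinarith
  have : bcsF2 x * s - bcsF1 x * ((bcsF1 x * (2 - F x) + F x * -bcsF1 x) / (2 * s))
      = (bcsF2 x * (F x * (2 - F x)) - bcsF1 x ^ 2 * (1 - F x)) / s := by
    rw [← hsq]; field_simp; ring
  rw [this]
  exact div_pos key hs

theorem bcs_upper (b : ℝ) : ∃ C : ℝ, 0 ≤ C ∧ ∀ x : ℝ, 0 ≤ x → x ≤ b → F x ≤ 2 →
    yFun x ≤ x ^ 2 / (2 * Real.sqrt 3) + C * x ^ 4 := by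
  have hK := Real.cosh_pos b
  set K := Real.cosh b with hKdef
  set r := Real.sqrt 3 with hr
  have hr0 : 0 < r := by positivity
  have hr2 : r ^ 2 = 3 := Real.sq_sqrt (by norm_num)
  set M := 1 / (4 * r) + K * r / 180 * b ^ 2 with hM
  have hM0 : 0 ≤ M := by positivity
  refine ⟨2 * (K * r / 180) + 16 * M ^ 3 * b ^ 2, by positivity, ?_⟩
  intro x hx hxb hF2
  have hF0 : 0 ≤ F x := by
    have := bcs_F_lower b x hx hxb
    nlinarith [pow_nonneg hx 4]
  set θ := yFun x / 2 with hθ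
  have hθ0 : 0 ≤ θ := by have := Real.arccos_nonneg (1 - F x); simp only [hθ, yFun]; linarith
  have hθ1 : θ ≤ Real.pi / 2 := by
    have := Real.arccos_le_pi (1 - F x); simp only [hθ, yFun]; linarith
  have hcos : Real.cos (2 * θ) = 1 - F x := by
    rw [show 2 * θ = Real.arccos (1 - F x) by simp only [hθ, yFun]; ring]
    exact Real.cos_arccos (by linarith) (by linarith)
  set v := Real.sin θ with hv
  have hv0 : 0 ≤ v := Real.sin_nonneg_of_nonneg_of_le_pi hθ0 (by linarith [Real.pi_pos])
  have hvF : v ^ 2 = F x / 2 := by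
    have := Real.cos_two_mul θ
    have := Real.sin_sq_add_cos_sq θ
    linarith
  have hx2 : x ^ 2 ≤ b ^ 2 := by gcongr
  have hvu : v ≤ x ^ 2 / (4 * r) + K * r / 180 * x ^ 4 := by
    refine le_of_abs_le (abs_le_of_sq_le_sq ?_ (by positivity))
    rw [hvF]
    have hup := bcs_F_upper b x hx hxb
    have e : (x ^ 2 / (4 * r) + K * r / 180 * x ^ 4) ^ 2
        = x ^ 4 / (16 * r ^ 2) + K / 360 * x ^ 6 + (K * r / 180 * x ^ 4) ^ 2 := by
      field_simp; ring
    rw [e, hr2]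
    have : 0 ≤ (K * r / 180 * x ^ 4) ^ 2 := by positivity
    have : 0 ≤ K * x ^ 6 := by positivity
    linarith
  have hvM : v ≤ M * x ^ 2 := by
    have : K * r / 180 * x ^ 4 ≤ K * r / 180 * b ^ 2 * x ^ 2 := by
      rw [show x ^ 4 = x ^ 2 * x ^ 2 by ring, ← mul_assoc, mul_assoc _ (b^2), mul_comm (b^2), ← mul_assoc]
      gcongr
    calc v ≤ _ := hvu
      _ ≤ x ^ 2 / (4 * r) + K * r / 180 * b ^ 2 * x ^ 2 := by linarith
      _ = _ := by rw [hM]; ring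
  have hθ2v : θ ≤ 2 * v := by
    have h := Real.mul_le_sin hθ0 hθ1
    have h4 := Real.pi_le_four
    have : 1 / 2 * θ ≤ 2 / Real.pi * θ := by
      apply mul_le_mul_of_nonneg_right _ hθ0
      rw [div_le_div_iff₀ (by norm_num) Real.pi_pos]; linarith
    linarith
  have hθv : θ ≤ v + θ ^ 3 := by
    by_cases h1 : θ ≤ 1
    · rcases hθ0.eq_or_lt with h | h
      · rw [← h] at *; positivity
      · have := Real.sin_gt_sub_cube h
        have := pow_pos h 3
        linarith
    · have : θ ≤ θ ^ 3 := le_self_pow₀ (by linarith) (by norm_num)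
      linarith
  have h3 : θ ^ 3 ≤ 8 * v ^ 3 := by
    calc θ ^ 3 ≤ (2 * v) ^ 3 := by gcongr
      _ = _ := by ring
  have h4 : v ^ 3 ≤ M ^ 3 * b ^ 2 * x ^ 4 := by
    calc v ^ 3 ≤ (M * x ^ 2) ^ 3 := by gcongr
      _ = M ^ 3 * x ^ 2 * x ^ 4 := by ring
      _ ≤ _ := by gcongr
  have h5 : x ^ 2 / (2 * r) = 2 * (x ^ 2 / (4 * r)) := by field_simp; ring
  have : yFun x = 2 * θ := by rw [hθ]; ring
  rw [this, h5]
  nlinarith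

/-- On `(0, τ)` the boundary curve `y x = arccos (1 - F x)` is twice differentiable with
positive second derivative (hence convex); its slope tends to `+∞` as `x → τ⁻`; and
`x²/(2√3) ≤ y x ≤ x²/(2√3) + C x⁴` on `[0, τ]` for some constant `C ≥ 0`. -/
theorem boundary_curve_shape (τ : ℝ) (hτpos : 0 < τ)
    (hτ : Real.cosh (τ / 2) / Real.sinh (τ / 2) = τ / 2) :
    (∀ x ∈ Set.Ioo (0 : ℝ) τ,
      DifferentiableAt ℝ yFun x ∧ DifferentiableAt ℝ (deriv yFun) x ∧
        0 < deriv (deriv yFun) x) ∧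
    Filter.Tendsto (deriv yFun) (nhdsWithin τ (Set.Iio τ)) Filter.atTop ∧
    ∃ C : ℝ, 0 ≤ C ∧ ∀ x ∈ Set.Icc (0 : ℝ) τ,
      x ^ 2 / (2 * Real.sqrt 3) ≤ yFun x ∧
        yFun x ≤ x ^ 2 / (2 * Real.sqrt 3) + C * x ^ 4 := by
  have hF := bcs_Ftau τ hτpos hτ
  have hderiv : ∀ x ∈ Set.Ioo (0 : ℝ) τ,
      deriv yFun x = bcsF1 x / Real.sqrt (F x * (2 - F x)) := fun x hx =>
    (bcs_dy (bcs_Fpos x hx.1) (bcs_Flt hx.1.le hx.2 hF)).deriv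
  refine ⟨?_, ?_, ?_⟩
  · intro x hx
    obtain ⟨d, hd, hdd⟩ := bcs_ddy hx.1 (bcs_Flt hx.1.le hx.2 hF)
    have h : HasDerivAt (deriv yFun) d x := by
      apply hdd.congr_of_eventuallyEq
      filter_upwards [isOpen_Ioo.mem_nhds hx] with z hz using hderiv z hz
    exact ⟨(bcs_dy (bcs_Fpos x hx.1) (bcs_Flt hx.1.le hx.2 hF)).differentiableAt,
      h.differentiableAt, h.deriv ▸ hd⟩
  · have hmem : Set.Ioo 0 τ ∈ nhdsWithin τ (Set.Iio τ) := Ioo_mem_nhdsLT hτpos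
    have hs : Filter.Tendsto (fun x => Real.sqrt (F x * (2 - F x))) (nhdsWithin τ (Set.Iio τ))
        (nhdsWithin 0 (Set.Ioi 0)) := by
      rw [tendsto_nhdsWithin_iff]
      constructor
      · have hc : ContinuousAt (fun x => Real.sqrt (F x * (2 - F x))) τ :=
          ((bcs_d0 τ).continuousAt.mul (continuousAt_const.sub (bcs_d0 τ).continuousAt)).sqrt
        have := hc.tendsto.mono_left (nhdsWithin_le_nhds (s := Set.Iio τ))
        simpa [hF] using this
      · filter_upwards [hmem] with x hx
        have := bcs_Flt hx.1.le hx.2 hF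
        exact Real.sqrt_pos.2 (mul_pos (bcs_Fpos x hx.1) (by linarith))
    have hn : Filter.Tendsto bcsF1 (nhdsWithin τ (Set.Iio τ)) (nhds (bcsF1 τ)) :=
      (bcs_d1 τ).continuousAt.tendsto.mono_left nhdsWithin_le_nhds
    have := hn.pos_mul_atTop (bcs_F1pos τ hτpos) hs.inv_tendsto_nhdsGT_zero
    refine this.congr' ?_
    filter_upwards [hmem] with x hx
    rw [hderiv x hx, div_eq_mul_inv]; rfl
  · have hle : ∀ x ∈ Set.Icc (0 : ℝ) τ, F x ≤ 2 := by
      intro x hx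
      rcases hx.2.eq_or_lt with h | h
      · rw [h, hF]
      · exact (bcs_Flt hx.1 h hF).le
    obtain ⟨C, hC, hu⟩ := bcs_upper τ
    refine ⟨C, hC, fun x hx => ⟨?_, hu x hx.1 hx.2 (hle x hx)⟩⟩
    have hl := bcs_F_lower τ x hx.1 hx.2
    have hx2 := hle x hx
    set u := x ^ 2 / (2 * Real.sqrt 3) with hu
    have hu0 : 0 ≤ u := by positivity
    have husq : u ^ 2 = x ^ 4 / 12 := by
      rw [hu, div_pow, mul_pow, Real.sq_sqrt (by norm_num)]; ring
    have hupi : u ≤ Real.pi := by nlinarith [Real.pi_gt_three]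
    have hc := Real.one_sub_sq_div_two_le_cos (x := u)
    rw [← Real.arccos_cos hu0 hupi]
    exact Real.arccos_le_arccos (by linarith)
end

section
/- For every a ∈ ℝ and every k ∈ ℕ, ∫_ℝ |h_k(y − i·a)|² dy = (e^{a²}/(π·k!)) · ∬_{ℝ²} ((x₁ + a√2)² + x₂²)^k · e^{−x₁² − x₂²} dx₁ dx₂. -/
open MeasureTheory

/-- The creation (raising) operator `f ↦ z f - f'` on functions of a complex variable. -/
noncomputable def raiseOp (f : ℂ → ℂ) : ℂ → ℂ := fun z => z * f z - deriv f z

/-- The Hermite function `h_k(z) = (2^k k! √π)^{-1/2} (z - d/dz)^k e^{-z²/2}`,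
as an entire function of a complex variable. -/
noncomputable def hermiteFun (k : ℕ) (z : ℂ) : ℂ :=
  ((Real.sqrt ((2 : ℝ) ^ k * (k.factorial : ℝ) * Real.sqrt Real.pi) : ℝ) : ℂ)⁻¹ *
    (raiseOp^[k] fun w => Complex.exp (-(w ^ 2) / 2)) z

open Polynomial in
/-- Physicists' Hermite polynomials. -/
noncomputable def hermQ : ℕ → Polynomial ℂ
  | 0 => 1
  | k + 1 => 2 * X * hermQ k - derivative (hermQ k)

open Polynomial in
lemma hermQ_deriv (k : ℕ) : derivative (hermQ (k + 1)) = 2 * ((k : ℂ[X]) + 1) * hermQ k := by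
  induction k with
  | zero => simp [hermQ]
  | succ k ih =>
    rw [hermQ, derivative_sub, derivative_mul, ih, derivative_mul (f := 2 * ((k : ℂ[X]) + 1))]
    have h2 : derivative (2 * X : ℂ[X]) = 2 := by
      rw [derivative_mul, derivative_ofNat, derivative_X]; ring
    have h3 : derivative (2 * ((k : ℂ[X]) + 1)) = 0 := by
      rw [derivative_mul, derivative_ofNat, derivative_add, derivative_natCast, derivative_one]; ring
    rw [h2, h3]
    conv_rhs => rw [hermQ]
    have h4 : hermQ (k+1) = 2 * X * hermQ k - derivative (hermQ k) := rfl
    push_cast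
    rw [h4]
    ring

lemma hermQ_deriv' (k : ℕ) :
    Polynomial.derivative (hermQ k) = 2 * (k : Polynomial ℂ) * hermQ (k - 1) := by
  cases k with
  | zero => simp [hermQ]
  | succ k => rw [hermQ_deriv]; simp

lemma hermQ_conj (k : ℕ) : (hermQ k).map (starRingEnd ℂ) = hermQ k := by
  induction k with
  | zero => simp [hermQ]
  | succ k ih =>
    simp [hermQ, ← Polynomial.derivative_map, ih]

lemma raise_eq (k : ℕ) : (raiseOp^[k] fun w => Complex.exp (-(w ^ 2) / 2)) =
    fun z => (hermQ k).eval z * Complex.exp (-(z ^ 2) / 2) := by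
  induction k with
  | zero => simp [hermQ]
  | succ k ih =>
    rw [Function.iterate_succ_apply', ih]
    funext z
    have h1 : HasDerivAt (fun z : ℂ => -(z ^ 2) / 2) (-z) z := by
      have := ((hasDerivAt_id z).pow 2).neg.div_const 2
      exact this.congr_deriv (by simp; ring)
    have h := ((hermQ k).hasDerivAt z).mul h1.cexp
    have h' : deriv (fun z => (hermQ k).eval z * Complex.exp (-(z ^ 2) / 2)) z = _ := h.deriv
    rw [raiseOp, h', hermQ]
    simp
    ring

lemma gint (i : ℕ) : Integrable (fun x : ℝ => (x : ℂ) ^ i * Complex.exp (-(x : ℂ) ^ 2)) := by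
  have h := integrable_rpow_mul_exp_neg_mul_sq (b := 1) one_pos (s := (i : ℝ))
    (by have : (0:ℝ) ≤ i := by positivity
        linarith)
  convert h.ofReal (𝕜 := ℂ) using 2 with x
  simp

lemma pint (p : Polynomial ℂ) :
    Integrable (fun x : ℝ => p.eval (x : ℂ) * Complex.exp (-(x : ℂ) ^ 2)) := by
  induction p using Polynomial.induction_on' with
  | add p q hp hq =>
    refine (hp.add hq).congr (ae_of_all _ fun x => ?_)
    simp [add_mul]
  | monomial n c =>
    convert (gint n).const_mul c using 2 with x
    simp [mul_assoc]

noncomputable def gE (p : Polynomial ℂ) : ℂ :=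
  ∫ x : ℝ, p.eval (x : ℂ) * Complex.exp (-(x : ℂ) ^ 2)

lemma gE_add (p q : Polynomial ℂ) : gE (p + q) = gE p + gE q := by
  unfold gE
  rw [← integral_add (pint p) (pint q)]
  simp [add_mul]

lemma gE_C (c : ℂ) (p : Polynomial ℂ) : gE (Polynomial.C c * p) = c * gE p := by
  unfold gE
  rw [← integral_const_mul]
  simp [mul_assoc]

lemma gE_ibp (p : Polynomial ℂ) :
    gE (Polynomial.derivative p + Polynomial.C (-2) * (Polynomial.X * p)) = 0 := by
  unfold gE
  apply integral_eq_zero_of_hasDerivAt_of_integrable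
    (f := fun x : ℝ => p.eval (x : ℂ) * Complex.exp (-(x : ℂ) ^ 2)) _ (pint _) (pint p)
  intro x
  have h1 : HasDerivAt (fun z : ℂ => -(z ^ 2)) (-(2 * x)) (x : ℂ) := by
    have := ((hasDerivAt_id (x : ℂ)).pow 2).neg
    exact this.congr_deriv (by simp)
  have h := ((p.hasDerivAt (x : ℂ)).mul h1.cexp).comp_ofReal
  refine h.congr_deriv ?_
  simp
  ring

noncomputable def gA (a : ℝ) (m n : ℕ) : ℂ :=
  gE ((hermQ m).comp (Polynomial.X - Polynomial.C (a * Complex.I)) *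
    (hermQ n).comp (Polynomial.X + Polynomial.C (a * Complex.I)))

open Polynomial in
lemma gA_succ (a : ℝ) (m n : ℕ) :
    gA a (m + 1) n = -2 * (a * Complex.I) * gA a m n + 2 * n * gA a m (n - 1) := by
  set c : ℂ := a * Complex.I with hc
  have h := gE_ibp ((hermQ m).comp (X - C c) * (hermQ n).comp (X + C c))
  have e : (hermQ (m+1)).comp (X - C c) * (hermQ n).comp (X + C c)
      + (derivative ((hermQ m).comp (X - C c) * (hermQ n).comp (X + C c)) +
        C (-2) * (X * ((hermQ m).comp (X - C c) * (hermQ n).comp (X + C c))))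
      = C (-2 * c) * ((hermQ m).comp (X - C c) * (hermQ n).comp (X + C c))
       + C (2 * (n : ℂ)) * ((hermQ m).comp (X - C c) * (hermQ (n-1)).comp (X + C c)) := by
    rw [derivative_mul, derivative_comp, derivative_comp, hermQ_deriv' n]
    conv_lhs => rw [hermQ]
    have hC2 : (C 2 : ℂ[X]) = 2 := rfl
    simp [hC2]
    ring
  have e2 := congrArg gE e
  rw [gE_add, h, add_zero, gE_add, gE_C, gE_C] at e2
  exact e2

open Polynomial in
lemma gA_zero_succ (a : ℝ) (n : ℕ) :
    gA a 0 (n + 1) = 2 * (a * Complex.I) * gA a 0 n := by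
  set c : ℂ := a * Complex.I with hc
  have h := gE_ibp ((hermQ n).comp (X + C c))
  have e : (hermQ 0).comp (X - C c) * (hermQ (n+1)).comp (X + C c)
      + (derivative ((hermQ n).comp (X + C c)) +
        C (-2) * (X * ((hermQ n).comp (X + C c))))
      = C (2 * c) * ((hermQ 0).comp (X - C c) * (hermQ n).comp (X + C c)) := by
    rw [derivative_comp, hermQ, hermQ]
    have hC2 : (C 2 : ℂ[X]) = 2 := rfl
    simp [hC2]
    ring
  have e2 := congrArg gE e
  rw [gE_add, h, add_zero, gE_C] at e2
  exact e2

lemma gauss1 : ∫ x : ℝ, Complex.exp (-(x : ℂ) ^ 2) = (Real.sqrt Real.pi : ℂ) := by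
  have h := integral_gaussian 1
  have h2 : ∫ x : ℝ, Complex.exp (-(x : ℂ) ^ 2) = ((∫ x : ℝ, Real.exp (-1 * x ^ 2) : ℝ) : ℂ) := by
    rw [← integral_complex_ofReal]
    simp
  rw [h2, h]; simp

lemma gA_zero (a : ℝ) : gA a 0 0 = (Real.sqrt Real.pi : ℂ) := by
  simp [gA, gE, hermQ, gauss1]

/-- integrand in the plane -/
noncomputable def pF (b : ℝ) (m n : ℕ) (p : ℝ × ℝ) : ℂ :=
  ((p.1 : ℂ) + p.2 * Complex.I + b) ^ m * ((p.1 : ℂ) - p.2 * Complex.I + b) ^ n *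
    (Complex.exp (-(p.1 : ℂ) ^ 2) * Complex.exp (-(p.2 : ℂ) ^ 2))

lemma pF_int_aux (b : ℝ) (m n : ℕ) : ∀ i j : ℕ,
    Integrable (fun p : ℝ × ℝ => (p.1 : ℂ) ^ i * (p.2 : ℂ) ^ j * pF b m n p) := by
  induction m with
  | zero =>
    induction n with
    | zero =>
      intro i j
      refine ((gint i).mul_prod (gint j)).congr (ae_of_all _ fun p => ?_)
      simp [pF]
      ring
    | succ n ih =>
      intro i j
      refine (((ih (i+1) j).sub ((ih i (j+1)).const_mul Complex.I)).add
        ((ih i j).const_mul (b : ℂ))).congr (ae_of_all _ fun p => ?_)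
      simp [pF]
      ring
  | succ m ih =>
    intro i j
    refine (((ih (i+1) j).add ((ih i (j+1)).const_mul Complex.I)).add
      ((ih i j).const_mul (b : ℂ))).congr (ae_of_all _ fun p => ?_)
    simp [pF]
    ring

lemma pF_int (b : ℝ) (m n : ℕ) : Integrable (pF b m n) := by
  simpa using pF_int_aux b m n 0 0

lemma pF_int1 (b : ℝ) (m n : ℕ) : Integrable (fun p : ℝ × ℝ => (p.1 : ℂ) * pF b m n p) := by
  simpa using pF_int_aux b m n 1 0

lemma pF_int2 (b : ℝ) (m n : ℕ) : Integrable (fun p : ℝ × ℝ => (p.2 : ℂ) * pF b m n p) := by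
  simpa using pF_int_aux b m n 0 1

lemma line_zero {g g' : ℝ × ℝ → ℂ} (v : ℝ × ℝ) (hg : Integrable g) (hg' : Integrable g')
    (h : ∀ p, HasLineDerivAt ℝ g (g' p) p v) : ∫ p, g' p = 0 := by
  have := integral_bilinear_hasLineDerivAt_right_eq_neg_left_of_integrable
    (μ := (volume : Measure (ℝ × ℝ))) (f := fun _ => (1 : ℂ)) (f' := fun _ => 0) (g := g)
    (g' := g') (v := v) (B := ContinuousLinearMap.mul ℝ ℂ) (by simp) (by simpa using hg')
    (by simpa using hg) (fun x _ => by simpa [HasLineDerivAt] using hasDerivAt_const (0:ℝ) (1:ℂ))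
    (fun x _ => h x)
  simpa using this

lemma pF_deriv1 (b : ℝ) (m n : ℕ) (p : ℝ × ℝ) :
    HasLineDerivAt ℝ (pF b m n) (m * pF b (m - 1) n p + n * pF b m (n - 1) p
      - 2 * (p.1 * pF b m n p)) p (1, 0) := by
  unfold HasLineDerivAt
  have hu : HasDerivAt (fun t : ℝ => ((p.1 + t : ℝ) : ℂ)) 1 0 := by
    simpa using ((hasDerivAt_id (0 : ℝ)).const_add p.1).ofReal_comp
  have h := (((hu.add_const (p.2 * Complex.I)).add_const (b : ℂ)).pow m |>.mul
    (((hu.sub_const (p.2 * Complex.I)).add_const (b : ℂ)).pow n)).mul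
    (((hu.pow 2).neg.cexp).mul_const (Complex.exp (-(p.2 : ℂ) ^ 2)))
  refine (h.congr_deriv ?_).congr_of_eventuallyEq (Filter.Eventually.of_forall fun t => ?_)
  · simp [pF]
    ring
  · simp [pF]

lemma pF_deriv2 (b : ℝ) (m n : ℕ) (p : ℝ × ℝ) :
    HasLineDerivAt ℝ (pF b m n) (Complex.I * (m * pF b (m - 1) n p)
      - Complex.I * (n * pF b m (n - 1) p)
      - 2 * (p.2 * pF b m n p)) p (0, 1) := by
  unfold HasLineDerivAt
  have hu : HasDerivAt (fun t : ℝ => ((p.2 + t : ℝ) : ℂ)) 1 0 := by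
    simpa using ((hasDerivAt_id (0 : ℝ)).const_add p.2).ofReal_comp
  have h := ((((hu.mul_const Complex.I).const_add (p.1 : ℂ)).add_const (b : ℂ)).pow m |>.mul
    ((((hu.mul_const Complex.I).const_sub (p.1 : ℂ)).add_const (b : ℂ)).pow n)).mul
    (((hu.pow 2).neg.cexp).const_mul (Complex.exp (-(p.1 : ℂ) ^ 2)))
  refine (h.congr_deriv ?_).congr_of_eventuallyEq (Filter.Eventually.of_forall fun t => ?_)
  · simp [pF]
    ring
  · simp [pF]

noncomputable def gB (b : ℝ) (m n : ℕ) : ℂ := ∫ p, pF b m n p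

lemma gB_1 (b : ℝ) (m n : ℕ) :
    m * gB b (m - 1) n + n * gB b m (n - 1) - 2 * ∫ p : ℝ × ℝ, (p.1 : ℂ) * pF b m n p = 0 := by
  have i1 := (pF_int b (m - 1) n).const_mul (m : ℂ)
  have i2 := (pF_int b m (n - 1)).const_mul (n : ℂ)
  have i3 := (pF_int1 b m n).const_mul (2 : ℂ)
  have h := line_zero (1, 0) (pF_int b m n) ((i1.add i2).sub i3) (pF_deriv1 b m n)
  rw [integral_sub' (i1.add i2) i3, integral_add' i1 i2] at h
  simp only [integral_const_mul] at h
  exact h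

lemma gB_2 (b : ℝ) (m n : ℕ) :
    Complex.I * (m * gB b (m - 1) n) - Complex.I * (n * gB b m (n - 1))
      - 2 * ∫ p : ℝ × ℝ, (p.2 : ℂ) * pF b m n p = 0 := by
  have i1 := ((pF_int b (m - 1) n).const_mul (m : ℂ)).const_mul Complex.I
  have i2 := ((pF_int b m (n - 1)).const_mul (n : ℂ)).const_mul Complex.I
  have i3 := (pF_int2 b m n).const_mul (2 : ℂ)
  have h := line_zero (0, 1) (pF_int b m n) ((i1.sub i2).sub i3) (pF_deriv2 b m n)
  rw [integral_sub' (i1.sub i2) i3, integral_sub' i1 i2] at h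
  simp only [integral_const_mul] at h
  exact h

lemma gB_succ_left (b : ℝ) (m n : ℕ) :
    gB b (m + 1) n = b * gB b m n + n * gB b m (n - 1) := by
  have i1 := pF_int1 b m n
  have i2 := (pF_int2 b m n).const_mul Complex.I
  have i3 := (pF_int b m n).const_mul (b : ℂ)
  have e : pF b (m + 1) n = (fun p : ℝ × ℝ => (p.1 : ℂ) * pF b m n p) +
      (fun p : ℝ × ℝ => Complex.I * ((p.2 : ℂ) * pF b m n p)) + fun p => (b : ℂ) * pF b m n p := by
    funext p
    simp [pF]
    ring
  have h : gB b (m + 1) n = _ := congrArg (fun f : ℝ × ℝ → ℂ => ∫ p, f p) e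
  rw [integral_add' (i1.add i2) i3, integral_add' i1 i2] at h
  simp only [integral_const_mul] at h
  change _ = _ + _ + (b : ℂ) * gB b m n at h
  rw [h]
  linear_combination (-1/2) * gB_1 b m n - (Complex.I / 2) * gB_2 b m n
    + (m * gB b (m - 1) n - n * gB b m (n - 1)) / 2 * Complex.I_sq

lemma gB_succ_right (b : ℝ) (m n : ℕ) :
    gB b m (n + 1) = b * gB b m n + m * gB b (m - 1) n := by
  have i1 := pF_int1 b m n
  have i2 := (pF_int2 b m n).const_mul Complex.I
  have i3 := (pF_int b m n).const_mul (b : ℂ)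
  have e : pF b m (n + 1) = (fun p : ℝ × ℝ => (p.1 : ℂ) * pF b m n p) -
      (fun p : ℝ × ℝ => Complex.I * ((p.2 : ℂ) * pF b m n p)) + fun p => (b : ℂ) * pF b m n p := by
    funext p
    simp [pF]
    ring
  have h : gB b m (n + 1) = _ := congrArg (fun f : ℝ × ℝ → ℂ => ∫ p, f p) e
  rw [integral_add' (i1.sub i2) i3, integral_sub' i1 i2] at h
  simp only [integral_const_mul] at h
  change _ = _ - _ + (b : ℂ) * gB b m n at h
  rw [h]
  linear_combination (-1/2) * gB_1 b m n + (Complex.I / 2) * gB_2 b m n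
    - (m * gB b (m - 1) n - n * gB b m (n - 1)) / 2 * Complex.I_sq

lemma sqrt_pi_sq : (Real.sqrt Real.pi : ℂ) * (Real.sqrt Real.pi : ℂ) = (Real.pi : ℂ) := by
  rw [← Complex.ofReal_mul, Real.mul_self_sqrt Real.pi_pos.le]

lemma gB_zero (b : ℝ) : gB b 0 0 = (Real.pi : ℂ) := by
  have h := integral_prod_mul (μ := (volume : Measure ℝ)) (ν := (volume : Measure ℝ))
    (fun x : ℝ => Complex.exp (-(x : ℂ) ^ 2)) (fun x : ℝ => Complex.exp (-(x : ℂ) ^ 2))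
  rw [gauss1, sqrt_pi_sq] at h
  rw [← h]
  simp [gB, pF, Measure.volume_eq_prod]

lemma sqrt_two_sq : (Real.sqrt 2 : ℂ) ^ 2 = 2 := by
  rw [← Complex.ofReal_pow, Real.sq_sqrt (by norm_num)]
  simp

lemma gA_eq_gB (a : ℝ) (m : ℕ) : ∀ n : ℕ,
    gA a m n * (Real.sqrt Real.pi : ℂ) =
      (-Complex.I * (Real.sqrt 2 : ℂ)) ^ m * (Complex.I * (Real.sqrt 2 : ℂ)) ^ n *
        gB (a * Real.sqrt 2) m n := by
  have h2 := sqrt_two_sq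
  induction m with
  | zero =>
    intro n
    induction n with
    | zero => simp [gA_zero, gB_zero, sqrt_pi_sq]
    | succ n ih =>
      rw [gA_zero_succ, gB_succ_right]
      push_cast
      rw [mul_assoc, ih]
      simp only [pow_zero, one_mul, pow_succ]
      linear_combination (-(Complex.I * (Real.sqrt 2 : ℂ)) ^ n * gB (a * Real.sqrt 2) 0 n *
        Complex.I * a) * h2
  | succ m ih =>
    intro n
    rw [gA_succ, gB_succ_left]
    cases n with
    | zero =>
      have := ih 0
      simp only [pow_zero, mul_one, pow_succ] at this ⊢
      push_cast
      linear_combination (-2 * (a * Complex.I)) * this +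
        ((-Complex.I * (Real.sqrt 2 : ℂ)) ^ m * gB (a * Real.sqrt 2) m 0 * Complex.I * a) * h2
    | succ n =>
      have e1 := ih (n + 1)
      have e2 := ih n
      simp only [Nat.add_sub_cancel]
      rw [add_mul, mul_assoc _ (gA a m (n + 1)), e1, mul_assoc _ (gA a m n), e2]
      simp only [pow_succ]
      push_cast
      generalize (-Complex.I * (Real.sqrt 2 : ℂ)) ^ m = P
      generalize (Complex.I * (Real.sqrt 2 : ℂ)) ^ n = Q
      generalize gB (a * Real.sqrt 2) m (n + 1) = B1
      generalize gB (a * Real.sqrt 2) m n = B2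
      generalize (Real.sqrt 2 : ℂ) = s at *
      have hI := Complex.I_sq
      generalize Complex.I = I at *
      linear_combination (P * Q * B1 * I ^ 2 * s * a + P * Q * B2 * (n + 1) * I^2) * h2
        + 2 * P * Q * B2 * (n + 1) * hI

lemma lhs_int (a : ℝ) (k : ℕ) :
    ((∫ y : ℝ, ‖hermiteFun k ((y : ℂ) - (a : ℂ) * Complex.I)‖ ^ 2 : ℝ) : ℂ) =
      ((2 : ℂ) ^ k * (k.factorial : ℂ) * (Real.sqrt Real.pi : ℂ))⁻¹ * Complex.exp ((a : ℂ) ^ 2)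
        * gA a k k := by
  rw [← integral_complex_ofReal, gA, gE, ← integral_const_mul]
  congr 1
  funext y
  set z : ℂ := (y : ℂ) - (a : ℂ) * Complex.I with hz
  have hzc : (starRingEnd ℂ) z = (y : ℂ) + (a : ℂ) * Complex.I := by
    simp [hz]
  have hQ : (starRingEnd ℂ) ((hermQ k).eval z) = (hermQ k).eval ((y : ℂ) + (a : ℂ) * Complex.I) := by
    rw [← hzc]
    conv_rhs => rw [← hermQ_conj k]
    rw [Polynomial.eval_map, Polynomial.eval₂_hom]
  have hE : (starRingEnd ℂ) (Complex.exp (-(z ^ 2) / 2)) =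
      Complex.exp (-(((y : ℂ) + (a : ℂ) * Complex.I) ^ 2) / 2) := by
    rw [← Complex.exp_conj, ← hzc]
    have : (starRingEnd ℂ) 2 = 2 := Complex.conj_ofNat 2
    simp [this]
  have hpos : (0:ℝ) ≤ (2 : ℝ) ^ k * (k.factorial : ℝ) * Real.sqrt Real.pi := by positivity
  have hs : ((Real.sqrt ((2 : ℝ) ^ k * (k.factorial : ℝ) * Real.sqrt Real.pi) : ℝ) : ℂ)⁻¹ *
      ((Real.sqrt ((2 : ℝ) ^ k * (k.factorial : ℝ) * Real.sqrt Real.pi) : ℝ) : ℂ)⁻¹ =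
      ((2 : ℂ) ^ k * (k.factorial : ℂ) * (Real.sqrt Real.pi : ℂ))⁻¹ := by
    rw [← mul_inv, ← Complex.ofReal_mul, Real.mul_self_sqrt hpos]
    push_cast
    rfl
  have hx : Complex.exp (-(z ^ 2) / 2) *
      Complex.exp (-(((y : ℂ) + (a : ℂ) * Complex.I) ^ 2) / 2) =
      Complex.exp ((a : ℂ) ^ 2) * Complex.exp (-(y : ℂ) ^ 2) := by
    rw [← Complex.exp_add, ← Complex.exp_add, hz]
    congr 1
    linear_combination (-(a : ℂ) ^ 2) * Complex.I_sq
  rw [Complex.ofReal_pow, ← Complex.mul_conj', hermiteFun, raise_eq]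
  simp only [map_mul, map_inv₀, Complex.conj_ofReal, hQ, hE, Polynomial.eval_mul,
    Polynomial.eval_comp, Polynomial.eval_sub, Polynomial.eval_add, Polynomial.eval_X,
    Polynomial.eval_C]
  rw [← hs, ← hz]
  linear_combination (((Real.sqrt ((2 : ℝ) ^ k * (k.factorial : ℝ) * Real.sqrt Real.pi) : ℝ) : ℂ)⁻¹ *
      ((Real.sqrt ((2 : ℝ) ^ k * (k.factorial : ℝ) * Real.sqrt Real.pi) : ℝ) : ℂ)⁻¹ *
      (hermQ k).eval z * (hermQ k).eval ((y : ℂ) + (a : ℂ) * Complex.I)) * hx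

lemma rhs_int (b : ℝ) (k : ℕ) :
    ((∫ p : ℝ × ℝ, ((p.1 + b) ^ 2 + p.2 ^ 2) ^ k * Real.exp (-p.1 ^ 2 - p.2 ^ 2) : ℝ) : ℂ) =
      gB b k k := by
  rw [← integral_complex_ofReal, gB]
  congr 1
  funext p
  rw [pF, ← mul_pow, ← Complex.exp_add]
  push_cast
  congr 2
  linear_combination ((p.2 : ℂ) ^ 2) * Complex.I_sq

/-- The squared `L²` norm of `h_k(y - i a)` equals
`(e^{a²}/(π k!)) ∬ ((x₁ + a√2)² + x₂²)^k e^{-x₁²-x₂²} dx₁ dx₂`. -/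
theorem hermite_shift_norm_integral (a : ℝ) (k : ℕ) :
    (∫ y : ℝ, ‖hermiteFun k ((y : ℂ) - (a : ℂ) * Complex.I)‖ ^ 2) =
      Real.exp (a ^ 2) / (Real.pi * (k.factorial : ℝ)) *
        ∫ p : ℝ × ℝ, ((p.1 + a * Real.sqrt 2) ^ 2 + p.2 ^ 2) ^ k *
          Real.exp (-p.1 ^ 2 - p.2 ^ 2) := by
  apply Complex.ofReal_injective
  rw [lhs_int, Complex.ofReal_mul, rhs_int]
  have h := gA_eq_gB a k k
  have h3 : (-Complex.I * (Real.sqrt 2 : ℂ)) ^ k * (Complex.I * (Real.sqrt 2 : ℂ)) ^ k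
      = 2 ^ k := by
    rw [← mul_pow]
    congr 1
    linear_combination sqrt_two_sq - (Real.sqrt 2 : ℂ) ^ 2 * Complex.I_sq
  rw [h3] at h
  have hp : (Real.sqrt Real.pi : ℂ) ≠ 0 := by
    exact_mod_cast (Real.sqrt_pos.mpr Real.pi_pos).ne'
  have hk : (k.factorial : ℂ) ≠ 0 := by exact_mod_cast k.factorial_ne_zero
  push_cast
  rw [← sqrt_pi_sq]
  field_simp
  linear_combination h
end

section
/- Let k ∈ ℕ, write k₁ = k + 1/2, and let u ≥ 0. Then, with C₀ = √π·erf(π/2), (C₀/(e·√(8π·k₁)))·e^{−2u} ≤ e^{−k₁·(2u + sinh 2u)} · e^{2k₁·sinh²u} · L_k(−4k₁·sinh²u) ≤ √(27/e). -/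
/-- The Laguerre polynomial `L_k(x) = ∑_{m=0}^k (1/m!) C(k,m) (-x)^m`. -/
noncomputable def Lag (k : ℕ) (x : ℝ) : ℝ :=
  ∑ m ∈ Finset.range (k + 1), (1 / (m.factorial : ℝ)) * (k.choose m : ℝ) * (-x) ^ m

/-- The error function `erf z = (2/√π) ∫₀^z e^{-t²} dt`. -/
noncomputable def erf (z : ℝ) : ℝ :=
  2 / Real.sqrt Real.pi * ∫ t in (0 : ℝ)..z, Real.exp (-t ^ 2)

open Finset

noncomputable def bb (k : ℕ) (p : ℝ) (m : ℕ) : ℝ := (k.choose m : ℝ) * p ^ m * (1 - p) ^ (k - m)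

lemma bb_eval (k : ℕ) (p : ℝ) (m : ℕ) : (bernsteinPolynomial ℝ k m).eval p = bb k p m := by
  simp [bernsteinPolynomial, bb]

lemma bb_sum (k : ℕ) (p : ℝ) : ∑ m ∈ range (k + 1), bb k p m = 1 := by
  have h := congrArg (Polynomial.eval p) (bernsteinPolynomial.sum ℝ k)
  simpa [Polynomial.eval_finsetSum, bb_eval] using h

lemma bb_mean (k : ℕ) (p : ℝ) : ∑ m ∈ range (k + 1), (m : ℝ) * bb k p m = k * p := by
  have h := congrArg (Polynomial.eval p) (bernsteinPolynomial.sum_smul ℝ k)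
  simpa [Polynomial.eval_finsetSum, bb_eval] using h

lemma bb_var (k : ℕ) (p : ℝ) :
    ∑ m ∈ range (k + 1), ((m : ℝ) - k * p) ^ 2 * bb k p m = k * p * (1 - p) := by
  have h := congrArg (Polynomial.eval p) (bernsteinPolynomial.variance ℝ k)
  simp [Polynomial.eval_finsetSum, bb_eval] at h
  rw [← h]
  exact Finset.sum_congr rfl fun m _ => by ring

lemma bb_nonneg (k : ℕ) {p : ℝ} (h0 : 0 ≤ p) (h1 : p ≤ 1) (m : ℕ) : 0 ≤ bb k p m := by
  have : 0 ≤ 1 - p := by linarith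
  unfold bb; positivity

/-- Factorial bound in logarithmic form. -/
lemma log_fact (m : ℕ) : Real.log (m.factorial : ℝ) ≤
    1 + ((m : ℝ) + 1 / 2) * (Real.log ((m : ℝ) + 1 / 2) - 1) := by
  rcases m with _ | n
  · have := Real.log_two_lt_d9
    have h2 : Real.log (1 / 2) = -Real.log 2 := by rw [one_div, Real.log_inv]
    norm_num
    rw [h2]
    linarith
  · have h : Stirling.stirlingSeq (n + 1) ≤ Stirling.stirlingSeq 1 :=
      Stirling.stirlingSeq'_antitone (Nat.zero_le n)
    have hp := Stirling.stirlingSeq'_pos n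
    have h2 := Real.log_le_log hp h
    rw [Stirling.log_stirlingSeq_formula, Stirling.log_stirlingSeq_formula] at h2
    have hx : (0 : ℝ) < ((n + 1 : ℕ) : ℝ) := by positivity
    generalize (n + 1) = m at *
    simp only [Nat.factorial_one, Nat.cast_one] at h2
    rw [Real.log_mul (by norm_num) hx.ne', Real.log_div hx.ne' (Real.exp_pos 1).ne', Real.log_div one_ne_zero (Real.exp_pos 1).ne', Real.log_mul (by norm_num) (by norm_num)] at h2
    simp only [Real.log_one, Real.log_exp] at h2
    have h3 := Real.le_log_one_add_of_nonneg (x := 1 / (2 * (m : ℝ))) (by positivity)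
    have h4 : (m : ℝ) + 1 / 2 = m * (1 + 1 / (2 * (m : ℝ))) := by field_simp
    have h5 : Real.log ((m : ℝ) + 1 / 2) = Real.log m + Real.log (1 + 1 / (2 * (m : ℝ))) := by
      rw [h4, Real.log_mul hx.ne' (by positivity)]
    rw [h5]
    have h6 : (1 / 2 : ℝ) ≤ ((m : ℝ) + 1 / 2) * Real.log (1 + 1 / (2 * (m : ℝ))) := by
      have : (1 / 2 : ℝ) ≤ ((m : ℝ) + 1 / 2) * (2 * (1 / (2 * (m : ℝ))) / (1 / (2 * (m : ℝ)) + 2)) := by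
        rw [show 2 * (1 / (2 * (m : ℝ))) / (1 / (2 * (m : ℝ)) + 2) = 2 / (4 * m + 1) by field_simp; ring]
        rw [mul_div_assoc', div_le_div_iff₀ (by norm_num) (by positivity)]
        linarith
      exact this.trans (mul_le_mul_of_nonneg_left h3 (by positivity))
    linarith

lemma S_lower (k : ℕ) (p : ℝ) (h0 : 0 < p) (h1 : p ≤ 1) :
    Real.exp (-2 - Real.log ((k : ℝ) + 1 / 2) / 2) ≤
      ∑ m ∈ range (k + 1), bb k p m * (Real.exp (-(((k : ℝ) + 1 / 2) * p)) *
        ((((k : ℝ) + 1 / 2) * p) ^ m / (m.factorial : ℝ))) := by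
  set K : ℝ := (k : ℝ) + 1 / 2 with hK
  have hKpos : 0 < K := by positivity
  set l : ℝ := K * p with hl
  have hlpos : 0 < l := by positivity
  set mu : ℝ := k * p + 1 / 2 with hmu
  have hmupos : 0 < mu := by positivity
  have hkk : (0 : ℝ) ≤ k := by positivity
  have hmuK : mu ≤ K := by nlinarith
  set c : ℝ := -1 - l + k * p * Real.log l - mu * (Real.log mu - 1) - k * p * (1 - p) / mu with hc
  have hcge : -2 - Real.log K / 2 ≤ c := by
    have a1 : Real.log mu ≤ Real.log K := Real.log_le_log hmupos hmuK
    have a2 : k * p * (1 - p) / mu ≤ 1 - p := by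
      rw [div_le_iff₀ hmupos]; nlinarith
    have a3 := Real.log_le_sub_one_of_pos (div_pos hmupos hlpos)
    rw [Real.log_div hmupos.ne' hlpos.ne'] at a3
    have a4 : k * p * (mu / l - 1) ≤ (1 - p) / 2 := by
      have : mu / l - 1 = (1 - p) / 2 / l := by
        field_simp; simp only [hmu, hl, hK]; ring
      rw [this, mul_div_assoc', div_le_iff₀ hlpos]
      have : k * p ≤ l := by simp only [hl, hK]; nlinarith
      nlinarith
    have a5 : k * p * (Real.log mu - Real.log l) ≤ (1 - p) / 2 :=
      (mul_le_mul_of_nonneg_left a3 (by positivity)).trans a4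
    have a6 : mu - l = (1 - p) / 2 := by simp only [hmu, hl, hK]; ring
    have a7 : mu * Real.log mu = k * p * Real.log mu + Real.log mu / 2 := by
      simp only [hmu]; ring
    simp only [hc]
    nlinarith
  refine (Real.exp_le_exp.2 hcge).trans ?_
  have key : ∀ m ∈ range (k + 1),
      Real.exp c * ((1 - k * p * (Real.log l - Real.log mu) + k * p * (1 - p) / mu) * bb k p m
        + (Real.log l - Real.log mu) * (m * bb k p m)
        - (1 / mu) * (((m : ℝ) - k * p) ^ 2 * bb k p m)) ≤
      bb k p m * (Real.exp (-l) * (l ^ m / (m.factorial : ℝ))) := by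
    intro m _
    have hb := bb_nonneg k h0.le h1 m
    have hf : (0 : ℝ) < m.factorial := by positivity
    have e1 : Real.exp (-l) * (l ^ m / (m.factorial : ℝ)) =
        Real.exp (-l + m * Real.log l - Real.log m.factorial) := by
      rw [Real.exp_sub, Real.exp_add, Real.exp_log hf, ← Real.log_pow, Real.exp_log (by positivity)]
      ring
    set y : ℝ := (m : ℝ) + 1 / 2 with hy
    have hypos : 0 < y := by positivity
    have b1 := Real.log_le_sub_one_of_pos (div_pos hypos hmupos)
    rw [Real.log_div hypos.ne' hmupos.ne'] at b1
    have b2 := mul_le_mul_of_nonneg_left b1 hypos.le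
    have b3 := log_fact m
    rw [← hy] at b3
    have b4 : y * (y / mu - 1) = (1 / mu) * ((m : ℝ) - k * p) ^ 2 + (m - k * p) := by
      field_simp; simp only [hy, hmu]; ring
    have b5 : c + ((- k * p * (Real.log l - Real.log mu) + k * p * (1 - p) / mu)
        + (Real.log l - Real.log mu) * m - (1 / mu) * ((m : ℝ) - k * p) ^ 2) ≤
        -l + m * Real.log l - Real.log m.factorial := by
      have a7 : mu * Real.log mu = k * p * Real.log mu + Real.log mu / 2 := by
        simp only [hmu]; ring
      have a8 : y * Real.log mu = m * Real.log mu + Real.log mu / 2 := by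
        simp only [hy]; ring
      have a9 : mu - y = k * p - m := by simp only [hy, hmu]; ring
      simp only [hc]
      nlinarith
    rw [e1]
    have b6 := Real.exp_le_exp.2 b5
    rw [Real.exp_add] at b6
    have b7 := Real.add_one_le_exp ((- k * p * (Real.log l - Real.log mu) + k * p * (1 - p) / mu)
        + (Real.log l - Real.log mu) * m - (1 / mu) * ((m : ℝ) - k * p) ^ 2)
    have b8 := (mul_le_mul_of_nonneg_left b7 (Real.exp_pos c).le).trans b6
    have b9 := mul_le_mul_of_nonneg_left b8 hb
    refine le_trans (le_of_eq ?_) b9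
    ring
  refine le_trans (le_of_eq ?_) (Finset.sum_le_sum key)
  rw [← Finset.mul_sum, Finset.sum_sub_distrib, Finset.sum_add_distrib, ← Finset.mul_sum,
    ← Finset.mul_sum, ← Finset.mul_sum, bb_sum, bb_mean, bb_var]
  ring

lemma S_upper (k : ℕ) (p : ℝ) (h0 : 0 ≤ p) (h1 : p ≤ 1) (l : ℝ) (hl : 0 ≤ l) :
      ∑ m ∈ range (k + 1), bb k p m * (Real.exp (-l) * (l ^ m / (m.factorial : ℝ))) ≤ 1 := by
  have h : ∀ m ∈ range (k + 1), bb k p m * (Real.exp (-l) * (l ^ m / (m.factorial : ℝ))) ≤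
      Real.exp (-l) * (l ^ m / (m.factorial : ℝ)) := by
    intro m hm
    have hb : bb k p m ≤ 1 := by
      rw [← bb_sum k p]
      exact Finset.single_le_sum (f := bb k p) (fun i _ => bb_nonneg k h0 h1 i) hm
    exact mul_le_of_le_one_left (by positivity) hb
  refine (Finset.sum_le_sum h).trans ?_
  rw [← Finset.mul_sum]
  have := mul_le_mul_of_nonneg_left (Real.sum_le_exp_of_nonneg hl (k + 1)) (Real.exp_pos (-l)).le
  rwa [← Real.exp_add, neg_add_cancel, Real.exp_zero] at this

/-- `erf` bound. -/
lemma erf_bound : Real.sqrt Real.pi * erf (Real.pi / 2) ≤ Real.sqrt Real.pi := by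
  have hpi : 0 < Real.sqrt Real.pi := Real.sqrt_pos.2 Real.pi_pos
  have h1 : ∫ t in (0 : ℝ)..(Real.pi / 2), Real.exp (-t ^ 2) ≤ Real.sqrt Real.pi / 2 := by
    have h2 := integral_gaussian_Ioi 1
    simp only [neg_mul, one_mul, div_one] at h2
    rw [← h2, intervalIntegral.integral_of_le (by positivity)]
    refine MeasureTheory.setIntegral_mono_set ?_ ?_ ?_
    · have := (integrable_exp_neg_mul_sq (b := 1) one_pos).integrableOn (s := Set.Ioi 0)
      simpa using this
    · exact Filter.Eventually.of_forall fun t => (Real.exp_pos _).le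
    · exact (Set.Ioc_subset_Ioi_self).eventuallyLE
  unfold erf
  rw [← mul_assoc, mul_div_cancel₀ _ hpi.ne']
  linarith

lemma F_eq (k : ℕ) (u : ℝ) : 
    Real.exp (-((k : ℝ) + 1 / 2) * (2 * u + Real.sinh (2 * u))) *
        (Real.exp (2 * ((k : ℝ) + 1 / 2) * Real.sinh u ^ 2) *
          Lag k (-4 * ((k : ℝ) + 1 / 2) * Real.sinh u ^ 2)) =
    Real.exp (-u) * ∑ m ∈ range (k + 1), bb k (1 - Real.exp (-2 * u)) m *
      (Real.exp (-(((k : ℝ) + 1 / 2) * (1 - Real.exp (-2 * u)))) *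
        ((((k : ℝ) + 1 / 2) * (1 - Real.exp (-2 * u))) ^ m / (m.factorial : ℝ))) := by
  have ht : Real.exp (-2 * u) ≠ 0 := (Real.exp_pos _).ne'
  have e1 : Real.exp (2 * u) * Real.exp (-2 * u) = 1 := by
    rw [← Real.exp_add]; simp
  have s1 : 4 * Real.sinh u ^ 2 = Real.exp (2 * u) - 2 + Real.exp (-2 * u) := by
    rw [Real.sinh_eq, show 2 * u = u + u by ring, show -2 * u = -u + -u by ring, Real.exp_add, Real.exp_add]
    have : Real.exp u * Real.exp (-u) = 1 := by rw [← Real.exp_add]; simp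
    linear_combination -2 * this
  have s2 : Real.sinh (2 * u) = (Real.exp (2 * u) - Real.exp (-2 * u)) / 2 := by
    rw [Real.sinh_eq]; ring_nf
  have s3 : -((k : ℝ) + 1 / 2) * (2 * u + Real.sinh (2 * u)) + 2 * ((k : ℝ) + 1 / 2) * Real.sinh u ^ 2
      = -u + k * (-2 * u) + -(((k : ℝ) + 1 / 2) * (1 - Real.exp (-2 * u))) := by
    rw [s2]; linear_combination ((k : ℝ) + 1 / 2) / 2 * s1
  rw [← mul_assoc, ← Real.exp_add, s3, Real.exp_add, Real.exp_add, Real.exp_nat_mul, Lag,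
    mul_assoc, mul_assoc, Finset.mul_sum, Finset.mul_sum]
  congr 1
  refine Finset.sum_congr rfl fun m hm => ?_
  have hmk : m ≤ k := by simpa [Nat.lt_succ_iff] using hm
  have s4 : -(-4 * ((k : ℝ) + 1 / 2) * Real.sinh u ^ 2) =
      ((k : ℝ) + 1 / 2) * (1 - Real.exp (-2 * u)) * (1 - Real.exp (-2 * u)) / Real.exp (-2 * u) := by
    rw [eq_div_iff ht]
    linear_combination ((k : ℝ) + 1 / 2) * Real.exp (-2 * u) * s1 + ((k : ℝ) + 1 / 2) * e1
  rw [s4, bb, sub_sub_cancel]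
  generalize Real.exp (-2 * u) = t at *
  obtain ⟨j, rfl⟩ := Nat.exists_eq_add_of_le hmk
  rw [Nat.add_sub_cancel_left, div_pow, mul_pow, pow_add]
  field_simp

/-- Two-sided bound on `e^{-k₁(2u + sinh 2u)} ‖Π_{√(2k₁) sinh u, k}‖`, where
`‖Π_{√(2k₁) sinh u, k}‖ = e^{2k₁ sinh²u} L_k(-4 k₁ sinh²u)` and `k₁ = k + 1/2`. -/
theorem projection_norm_weak_asymptotics (k : ℕ) (u : ℝ) (hu : 0 ≤ u) :
    Real.sqrt Real.pi * erf (Real.pi / 2) /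
        (Real.exp 1 * Real.sqrt (8 * Real.pi * ((k : ℝ) + 1 / 2))) * Real.exp (-2 * u) ≤
      Real.exp (-((k : ℝ) + 1 / 2) * (2 * u + Real.sinh (2 * u))) *
        (Real.exp (2 * ((k : ℝ) + 1 / 2) * Real.sinh u ^ 2) *
          Lag k (-4 * ((k : ℝ) + 1 / 2) * Real.sinh u ^ 2)) ∧
    Real.exp (-((k : ℝ) + 1 / 2) * (2 * u + Real.sinh (2 * u))) *
        (Real.exp (2 * ((k : ℝ) + 1 / 2) * Real.sinh u ^ 2) *
          Lag k (-4 * ((k : ℝ) + 1 / 2) * Real.sinh u ^ 2)) ≤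
      Real.sqrt (27 / Real.exp 1) := by
  rw [F_eq]
  have ht0 := Real.exp_pos (-2 * u)
  have ht1 : Real.exp (-2 * u) ≤ 1 := Real.exp_le_one_iff.2 (by linarith)
  have hu1 : Real.exp (-u) ≤ 1 := Real.exp_le_one_iff.2 (by linarith)
  have hK : (0 : ℝ) < (k : ℝ) + 1 / 2 := by positivity
  have he := Real.exp_one_lt_d9
  have he' := Real.exp_one_gt_d9
  constructor
  · have hc : Real.sqrt Real.pi * erf (Real.pi / 2) /
        (Real.exp 1 * Real.sqrt (8 * Real.pi * ((k : ℝ) + 1 / 2))) ≤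
        Real.exp (-2 - Real.log ((k : ℝ) + 1 / 2) / 2) := by
      have r1 : Real.exp (-2 - Real.log ((k : ℝ) + 1 / 2) / 2) =
          1 / (Real.exp 1 * Real.exp 1 * Real.sqrt ((k : ℝ) + 1 / 2)) := by
        rw [Real.exp_sub, Real.sqrt_eq_rpow, Real.rpow_def_of_pos hK, Real.exp_neg,
          show (2 : ℝ) = 1 + 1 by norm_num, Real.exp_add]
        field_simp
      rw [r1, Real.sqrt_mul (by positivity), Real.sqrt_mul (by positivity)]
      have hs : 0 < Real.sqrt ((k : ℝ) + 1 / 2) := Real.sqrt_pos.2 hK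
      have hpi : 0 < Real.sqrt Real.pi := Real.sqrt_pos.2 Real.pi_pos
      have h8 : Real.exp 1 ≤ Real.sqrt 8 := Real.le_sqrt_of_sq_le (by nlinarith)
      have h80 : 0 < Real.sqrt 8 := by positivity
      rw [div_le_div_iff₀ (by positivity) (by positivity)]
      calc _ ≤ Real.sqrt Real.pi * (Real.exp 1 * Real.exp 1 * Real.sqrt ((k : ℝ) + 1 / 2)) :=
            mul_le_mul_of_nonneg_right erf_bound (by positivity)
        _ ≤ Real.sqrt Real.pi * (Real.exp 1 * Real.sqrt 8 * Real.sqrt ((k : ℝ) + 1 / 2)) := by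
            gcongr
        _ = _ := by ring
    have hS : Real.exp (-2 - Real.log ((k : ℝ) + 1 / 2) / 2) ≤
        ∑ m ∈ range (k + 1), bb k (1 - Real.exp (-2 * u)) m *
          (Real.exp (-(((k : ℝ) + 1 / 2) * (1 - Real.exp (-2 * u)))) *
          ((((k : ℝ) + 1 / 2) * (1 - Real.exp (-2 * u))) ^ m / (m.factorial : ℝ))) := by
      rcases hu.eq_or_lt with h | h
      · subst h
        have hh : (1 / 2 : ℝ) ≤ (k : ℝ) + 1 / 2 := by
          have : (0 : ℝ) ≤ k := by positivity
          linarith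
        have hl := Real.log_le_log (by norm_num) hh
        have h2 : Real.log (1 / 2) = -Real.log 2 := by rw [one_div, Real.log_inv]
        have h3 := Real.log_two_lt_d9
        have h4 : Real.exp (-2 - Real.log ((k : ℝ) + 1 / 2) / 2) ≤ 1 :=
          Real.exp_le_one_iff.2 (by linarith)
        refine h4.trans (le_of_eq ?_)
        rw [Finset.sum_eq_single_of_mem 0 (by simp)]
        · simp [bb]
        · intro m _ hm
          simp [hm]
      · exact S_lower k (1 - Real.exp (-2 * u)) (by
          have : Real.exp (-2 * u) < 1 := Real.exp_lt_one_iff.2 (by linarith)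
          linarith) (by linarith)
    refine (mul_le_mul_of_nonneg_right (hc.trans hS) ht0.le).trans ?_
    rw [mul_comm]
    refine mul_le_mul_of_nonneg_right (Real.exp_le_exp.2 (by linarith)) ?_
    exact (Real.exp_pos _).le.trans hS
  · refine le_trans (mul_le_one₀ hu1 ?_ (S_upper k _ (by linarith) (by linarith) _ (mul_nonneg hK.le (by linarith)))) ?_
    · refine Finset.sum_nonneg fun m _ => mul_nonneg (bb_nonneg k (by linarith) (by linarith) m) ?_
      have : 0 ≤ 1 - Real.exp (-2 * u) := by linarith
      positivity
    · refine Real.le_sqrt_of_sq_le ?_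
      rw [le_div_iff₀ (Real.exp_pos 1)]
      linarith
end

section
/- Let p₁, p₂ > 0 satisfy p₁ + p₂ < 1/2. Then there exist K > 0 and C > 0 such that for every k ∈ ℕ with k ≥ K and every real u satisfying (3/8)·k₁^{−2p₂} ≤ u ≤ p₂·log k₁ (where k₁ = k + 1/2), one has | e^{2k₁·sinh²u} · L_k(−4k₁·sinh²u) · (4π·k₁·sinh 2u)^{1/2} · e^{−k₁·(2u + sinh 2u)} − 1 | ≤ C·k₁^{−p₁}. -/
open Filter Topology Set

noncomputable def LY (k : ℕ) (x : ℝ) : ℝ :=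
  ∑ m ∈ Finset.range (k + 1), (1 / (m.factorial : ℝ)) * (k.choose m : ℝ) * x ^ m

noncomputable def LN (k : ℕ) (x : ℝ) : ℝ :=
  ∑ m ∈ Finset.range (k + 1), (1 / (m.factorial : ℝ)) * (k.choose m : ℝ) * (m * x ^ m)

noncomputable def LY1 (k : ℕ) (x : ℝ) : ℝ :=
  ∑ m ∈ Finset.range (k + 1), (1 / (m.factorial : ℝ)) * (k.choose m : ℝ) * (m * x ^ (m - 1))

lemma LY_deriv (k : ℕ) (x : ℝ) : HasDerivAt (LY k) (LY1 k x) x := by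
  unfold LY LY1
  apply HasDerivAt.fun_sum
  intro m _
  exact (hasDerivAt_pow m x).const_mul _

lemma LY1_eq (k : ℕ) (x : ℝ) : x * LY1 k x = LN k x := by
  unfold LY1 LN
  rw [Finset.mul_sum]
  refine Finset.sum_congr rfl fun m _ => ?_
  rcases m with _ | m
  · simp
  · simp [pow_succ]; ring

lemma LN_deriv (k : ℕ) (x : ℝ) : HasDerivAt (LN k) (k * LY k x - LN k x) x := by
  have h : HasDerivAt (LN k) (∑ m ∈ Finset.range (k + 1),
      (1 / (m.factorial : ℝ)) * (k.choose m : ℝ) * (m * (m * x ^ (m - 1)))) x := by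
    unfold LN
    apply HasDerivAt.fun_sum
    intro m _
    exact ((hasDerivAt_pow m x).const_mul _).const_mul _
  convert h using 1
  unfold LY LN
  rw [Finset.mul_sum, ← Finset.sum_sub_distrib, Finset.sum_range_succ, Finset.sum_range_succ']
  have : ∀ m ∈ Finset.range k, ((k:ℝ) * (1 / (m.factorial : ℝ) * (k.choose m : ℝ) * x ^ m) -
      1 / (m.factorial : ℝ) * (k.choose m : ℝ) * (m * x ^ m)) =
      1 / ((m + 1).factorial : ℝ) * (k.choose (m+1) : ℝ) *
        (((m + 1 : ℕ) : ℝ) * (((m + 1 : ℕ) : ℝ) * x ^ (m + 1 - 1))) := by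
    intro m hm
    have hm' : m ≤ k := (Finset.mem_range.mp hm).le
    have h1 : (k.choose (m+1) : ℝ) * (m + 1) = k.choose m * (k - m) := by
      have := Nat.choose_succ_right_eq k m
      rw [← Nat.cast_sub hm']
      exact_mod_cast this
    have h2 : ((m+1).factorial : ℝ) = (m + 1) * m.factorial := by
      rw [Nat.factorial_succ]; push_cast; ring
    have h3 : (m.factorial : ℝ) ≠ 0 := by positivity
    rw [h2]
    simp only [Nat.add_sub_cancel]
    push_cast
    field_simp
    linear_combination (-x^m) * h1
  rw [Finset.sum_congr rfl this]
  simp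
  ring

lemma LY_pos (k : ℕ) {x : ℝ} (hx : 0 ≤ x) : 0 < LY k x := by
  unfold LY
  rw [Finset.sum_range_succ']
  have : 0 ≤ ∑ m ∈ Finset.range k, (1 / ((m+1).factorial : ℝ)) * (k.choose (m+1) : ℝ) * x ^ (m+1) :=
    Finset.sum_nonneg fun m _ => by positivity
  simp; simp at this; linarith

lemma LN_nonneg (k : ℕ) {x : ℝ} (hx : 0 ≤ x) : 0 ≤ LN k x :=
  Finset.sum_nonneg fun m _ => by positivity

lemma LN_zero (k : ℕ) : LN k 0 = 0 := by rw [← LY1_eq]; simp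

/-- the logarithmic derivative -/
noncomputable def qf (k : ℕ) (x : ℝ) : ℝ := x / 2 + LN k x / LY k x

lemma qf_nonneg (k : ℕ) {x : ℝ} (hx : 0 ≤ x) : 0 ≤ qf k x := by
  have := LY_pos k hx
  have := LN_nonneg k hx
  unfold qf; positivity

lemma qf_deriv (k : ℕ) {x : ℝ} (hx : 0 < x) :
    HasDerivAt (qf k) (((k + 1/2) * x + x^2/4 - qf k x ^ 2) / x) x := by
  have hY := LY_pos k hx.le
  have h := ((hasDerivAt_id x).div_const 2).add ((LN_deriv k x).div (LY_deriv k x) hY.ne')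
  refine h.congr_deriv ?_
  have h1 := LY1_eq k x
  have : LY1 k x = LN k x / x := by field_simp; linarith
  rw [this]; unfold qf
  field_simp
  ring

lemma qf_cont (k : ℕ) {x : ℝ} (hx : 0 ≤ x) : ContinuousAt (qf k) x := by
  have hY := LY_pos k hx
  unfold qf
  exact (continuousAt_id.div_const 2).add ((LN_deriv k x).continuousAt.div (LY_deriv k x).continuousAt hY.ne')

noncomputable def xf (k : ℕ) (u : ℝ) : ℝ := 4 * ((k:ℝ) + 1/2) * Real.sinh u ^ 2
noncomputable def Qf (k : ℕ) (u : ℝ) : ℝ := 2 * ((k:ℝ) + 1/2) * (Real.sinh u * Real.cosh u)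
noncomputable def gf (u : ℝ) : ℝ := 1 / 2 - 1 / (4 * Real.cosh u ^ 2)
noncomputable def Ef (k : ℕ) (u : ℝ) : ℝ := (qf k (xf k u) - Qf k u + gf u) * Qf k u

lemma xf_deriv (k : ℕ) (u : ℝ) : HasDerivAt (xf k) (8 * ((k:ℝ) + 1/2) * (Real.sinh u * Real.cosh u)) u := by
  have h := ((Real.hasDerivAt_sinh u).pow 2).const_mul (4 * ((k:ℝ) + 1/2))
  refine h.congr_deriv ?_
  simp; ring

lemma Qf_deriv (k : ℕ) (u : ℝ) :
    HasDerivAt (Qf k) (2 * ((k:ℝ) + 1/2) * (Real.cosh u ^2 + Real.sinh u^2)) u := by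
  have h := ((Real.hasDerivAt_sinh u).mul (Real.hasDerivAt_cosh u)).const_mul (2 * ((k:ℝ) + 1/2))
  refine h.congr_deriv ?_
  ring

lemma gf_deriv (u : ℝ) :
    HasDerivAt gf (Real.sinh u / (2 * Real.cosh u ^ 3)) u := by
  have hc := Real.cosh_pos u
  have h := ((((Real.hasDerivAt_cosh u).pow 2).const_mul 4).inv
    (show 4 * Real.cosh u ^ 2 ≠ 0 by positivity)).const_sub (1/2)
  have e : gf = fun u => 1/2 - (4 * Real.cosh u ^ 2)⁻¹ := by
    funext u; unfold gf; rw [one_div (4 * _)]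
  rw [e]
  refine h.congr_deriv ?_
  simp
  field_simp; ring

lemma qx_deriv (k : ℕ) {u : ℝ} (hu : 0 < u) :
    HasDerivAt (fun u => qf k (xf k u))
      (2 * Real.cosh u / Real.sinh u * (Qf k u ^ 2 - qf k (xf k u) ^ 2)) u := by
  have hs : 0 < Real.sinh u := Real.sinh_pos_iff.mpr hu
  have hc := Real.cosh_pos u
  have hx : 0 < xf k u := by unfold xf; positivity
  have h := (qf_deriv k hx).comp u (xf_deriv k u)
  refine h.congr_deriv ?_
  generalize qf k (xf k u) = q
  unfold xf Qf
  have hcs := Real.cosh_sq u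
  have hκ : (0:ℝ) < k + 1/2 := by positivity
  generalize (k:ℝ) + 1/2 = κ at *
  field_simp
  rw [show Real.cosh u ^ 2 = Real.sinh u ^ 2 + 1 from hcs]
  ring

lemma Ef_deriv (k : ℕ) {u : ℝ} (hu : 0 < u) :
    HasDerivAt (Ef k)
      (2 * Real.cosh u / Real.sinh u * (Qf k u * (Qf k u ^ 2 - qf k (xf k u) ^ 2 - 2 * gf u * Qf k u
        + Real.sinh u ^ 2 / (4 * Real.cosh u ^ 4)) + 2 * gf u * Ef k u)) u := by
  have hs : 0 < Real.sinh u := Real.sinh_pos_iff.mpr hu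
  have hc := Real.cosh_pos u
  have h := (((qx_deriv k hu).sub (Qf_deriv k u)).add (gf_deriv u)).mul (Qf_deriv k u)
  refine h.congr_deriv ?_
  have e1 : 2 * ((k:ℝ) + 1/2) * (Real.cosh u ^2 + Real.sinh u^2) =
      2 * Real.cosh u / Real.sinh u * (2 * gf u * Qf k u) := by
    unfold gf Qf
    have hcs : Real.sinh u ^ 2 = Real.cosh u ^ 2 - 1 := by linarith [Real.cosh_sq u]
    rw [hcs]
    field_simp; ring
  have e2 : Real.sinh u / (2 * Real.cosh u ^ 3) =
      2 * Real.cosh u / Real.sinh u * (Real.sinh u ^ 2 / (4 * Real.cosh u ^ 4)) := by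
    field_simp; ring
  rw [e1, e2]
  simp only [Pi.add_apply, Pi.sub_apply]
  unfold Ef
  ring

lemma gf_bounds (u : ℝ) : 1/4 ≤ gf u ∧ gf u ≤ 1/2 ∧
    Real.sinh u ^ 2 / (4 * Real.cosh u ^ 4) ≤ 1/16 := by
  have hc := Real.cosh_pos u
  have hcs : Real.cosh u ^ 2 = Real.sinh u ^ 2 + 1 := Real.cosh_sq u
  refine ⟨?_, ?_, ?_⟩
  · unfold gf
    have : 1 / (4 * Real.cosh u ^ 2) ≤ 1 / 4 := by
      rw [div_le_div_iff₀ (by positivity) (by positivity)]; nlinarith [sq_nonneg (Real.sinh u)]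
    linarith
  · unfold gf
    have : 0 ≤ 1 / (4 * Real.cosh u ^ 2) := by positivity
    linarith
  · rw [div_le_div_iff₀ (by positivity) (by positivity)]
    have : Real.cosh u ^ 4 = (Real.sinh u ^ 2 + 1)^2 := by rw [← hcs]; ring
    rw [this]
    nlinarith [sq_nonneg (Real.sinh u ^ 2 - 1)]

lemma alg_upper {q Q g t : ℝ} (hQ : 0 < Q) (hg : 1/4 ≤ g) (hg2 : g ≤ 1/2) (ht : t ≤ 1/16)
    (h : (q - Q + g) * Q = 1) : Q * (Q^2 - q^2 - 2 * g * Q + t) + 2 * g * 1 < 0 := by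
  obtain ⟨e, he⟩ : ∃ e, q = Q - g + e := ⟨q - Q + g, by ring⟩
  subst he
  have h : e * Q = 1 := by rw [← h]; ring
  have e1 : Q * (Q^2 - (Q - g + e)^2 - 2 * g * Q + t) + 2 * g * 1 =
    -2 * Q * (e * Q) + 2 * g * (e * Q) - g^2 * Q - e * (e * Q) + Q * t + 2 * g := by ring
  rw [e1, h]
  have hep : 0 < e := by
    by_contra hh; nlinarith
  have h2 : Q * t ≤ g^2 * Q := by
    have : t ≤ g^2 := by nlinarith
    nlinarith
  nlinarith [sq_nonneg (Q - e), sq_nonneg (Q - 1)]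

lemma alg_lower {q Q g t : ℝ} (hQ : 0 < Q) (hq : 0 ≤ q) (hg : 1/4 ≤ g) (hg2 : g ≤ 1/2) (ht : 0 ≤ t)
    (h : (q - Q + g) * Q = -9) : 0 < Q * (Q^2 - q^2 - 2 * g * Q + t) + 2 * g * (-9) := by
  obtain ⟨e, he⟩ : ∃ e, q = Q - g + e := ⟨q - Q + g, by ring⟩
  subst he
  have h : e * Q = -9 := by rw [← h]; ring
  have hQ3 : 3 ≤ Q := by
    have : (Q - g + e) * Q ≥ 0 := by positivity
    nlinarith
  have e1 : Q * (Q^2 - (Q - g + e)^2 - 2 * g * Q + t) + 2 * g * (-9) =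
    -2 * Q * (e * Q) + 2 * g * (e * Q) - g^2 * Q - e * (e * Q) + Q * t + 2 * g * (-9) := by ring
  rw [e1, h]
  have hep : -3 ≤ e := by
    by_contra hh; nlinarith
  have h2 : 0 ≤ Q * t := by positivity
  have h3 : g^2 * Q ≤ 1/4 * Q := by
    have : g^2 ≤ 1/4 := by nlinarith
    nlinarith
  linarith

lemma Ef_cont0 (k : ℕ) : ContinuousAt (Ef k) 0 := by
  have hx0 : xf k 0 = 0 := by simp [xf]
  have h1 : ContinuousAt (fun u => qf k (xf k u)) 0 := by
    apply ContinuousAt.comp (g := qf k)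
    · rw [hx0]; exact qf_cont k le_rfl
    · exact (xf_deriv k 0).continuousAt
  exact ((h1.sub (Qf_deriv k 0).continuousAt).add (gf_deriv 0).continuousAt).mul
    (Qf_deriv k 0).continuousAt

lemma Ef_bounds (k : ℕ) {u : ℝ} (hu : 0 < u) : -9 ≤ Ef k u ∧ Ef k u ≤ 1 := by
  have hE0 : Ef k 0 = 0 := by simp [Ef, Qf]
  have hc := Ef_cont0 k
  have ev1 : ∀ᶠ v in 𝓝 (0:ℝ), Ef k v < 1 := hc.eventually_lt_const (by rw [hE0]; norm_num)
  have ev2 : ∀ᶠ v in 𝓝 (0:ℝ), -9 < Ef k v := hc.eventually_const_lt (by rw [hE0]; norm_num)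
  have ev : ∀ᶠ v in 𝓝[>] (0:ℝ), (Ef k v < 1 ∧ -9 < Ef k v) ∧ v ∈ Ioo 0 u :=
    ((ev1.and ev2).filter_mono nhdsWithin_le_nhds).and (Ioo_mem_nhdsGT hu)
  obtain ⟨a, ⟨ha1, ha2⟩, ha0, hau⟩ := ev.exists
  have hcont : ContinuousOn (Ef k) (Icc a u) := fun v hv =>
    (Ef_deriv k (ha0.trans_le hv.1)).continuousAt.continuousWithinAt
  have hpos : ∀ v, 0 < v → 0 < Qf k v ∧ 0 < 2 * Real.cosh v / Real.sinh v ∧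
      0 ≤ qf k (xf k v) ∧ 0 ≤ Real.sinh v ^ 2 / (4 * Real.cosh v ^ 4) := by
    intro v hv
    have hs : 0 < Real.sinh v := Real.sinh_pos_iff.mpr hv
    have hc := Real.cosh_pos v
    refine ⟨by unfold Qf; positivity, by positivity, qf_nonneg k (by unfold xf; positivity),
      by positivity⟩
  constructor
  · have := image_le_of_deriv_right_lt_deriv_boundary' (f := fun v => -Ef k v)
      (B := fun _ => 9) (B' := fun _ => 0) (a := a) (b := u)
      hcont.neg (fun v hv => (Ef_deriv k (ha0.trans_le hv.1)).neg.hasDerivWithinAt)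
      (show -Ef k a ≤ 9 by linarith) continuousOn_const (fun v _ => hasDerivWithinAt_const _ _ _) ?_
      (right_mem_Icc.mpr hau.le)
    · have h9 : -Ef k u ≤ 9 := this
      linarith
    · intro v hv hE
      have hE : Ef k v = -9 := by
        have h9 : -Ef k v = 9 := hE
        linarith
      obtain ⟨h1, h2, h3, h4⟩ := hpos v (ha0.trans_le hv.1)
      obtain ⟨g1, g2, g3⟩ := gf_bounds v
      have := alg_lower h1 h3 g1 g2 h4 hE
      rw [hE, neg_lt_zero]
      exact mul_pos h2 this
  · have := image_le_of_deriv_right_lt_deriv_boundary' (f := Ef k)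
      (B := fun _ => 1) (B' := fun _ => 0) (a := a) (b := u)
      hcont (fun v hv => (Ef_deriv k (ha0.trans_le hv.1)).hasDerivWithinAt)
      ha1.le continuousOn_const (fun v _ => hasDerivWithinAt_const _ _ _) ?_
      (right_mem_Icc.mpr hau.le)
    · exact this
    · intro v hv hE
      obtain ⟨h1, h2, h3, h4⟩ := hpos v (ha0.trans_le hv.1)
      obtain ⟨g1, g2, g3⟩ := gf_bounds v
      have := alg_upper h1 g1 g2 g3 hE
      rw [hE]
      exact mul_neg_of_pos_of_neg h2 this

noncomputable def ell (k : ℕ) (u : ℝ) : ℝ :=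
  xf k u / 2 + Real.log (LY k (xf k u)) + 1/2 * Real.log (4 * Real.pi * Qf k u)
    - ((k:ℝ) + 1/2) * (2 * u + 2 * (Real.sinh u * Real.cosh u))

lemma ell_deriv (k : ℕ) {u : ℝ} (hu : 0 < u) :
    HasDerivAt (ell k) (Ef k u / (((k:ℝ) + 1/2) * Real.sinh u ^ 2)) u := by
  have hs : 0 < Real.sinh u := Real.sinh_pos_iff.mpr hu
  have hc := Real.cosh_pos u
  have hκ : (0:ℝ) < k + 1/2 := by positivity
  have hx : 0 < xf k u := by unfold xf; positivity
  have hQ : 0 < Qf k u := by unfold Qf; positivity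
  have hY := LY_pos k hx.le
  have hpi := Real.pi_pos
  have h1 := ((LY_deriv k (xf k u)).comp u (xf_deriv k u)).log hY.ne'
  have h2 := (((Qf_deriv k u).const_mul (4 * Real.pi)).log (by positivity)).const_mul (1/2)
  have h3 := (((hasDerivAt_id u).const_mul 2).add
    (((Real.hasDerivAt_sinh u).mul (Real.hasDerivAt_cosh u)).const_mul 2)).const_mul ((k:ℝ) + 1/2)
  have h := ((((xf_deriv k u).div_const 2).add h1).add h2).sub h3
  refine h.congr_deriv ?_
  have hY1 : LY1 k (xf k u) = LN k (xf k u) / xf k u := by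
    have := LY1_eq k (xf k u); field_simp; linarith
  simp only [Function.comp_apply]
  rw [hY1]
  have hq : LN k (xf k u) / LY k (xf k u) = qf k (xf k u) - xf k u / 2 := by unfold qf; ring
  have e3 : LN k (xf k u) / xf k u * (8 * ((k:ℝ) + 1/2) * (Real.sinh u * Real.cosh u)) / LY k (xf k u)
     = (qf k (xf k u) - xf k u / 2) / xf k u * (8 * ((k:ℝ) + 1/2) * (Real.sinh u * Real.cosh u)) := by
    rw [← hq]; ring
  rw [e3]
  unfold Ef
  generalize qf k (xf k u) = q
  have hcs : Real.sinh u ^ 2 = Real.cosh u ^ 2 - 1 := by linarith [Real.cosh_sq u]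
  unfold xf Qf gf
  generalize (k:ℝ) + 1/2 = κ at *
  generalize Real.sinh u = s at *
  generalize Real.cosh u = c at *
  field_simp
  ring_nf
  linear_combination (-16 * c * κ * s + 4) * hcs

lemma coth_deriv {u : ℝ} (hu : 0 < u) :
    HasDerivAt (fun u => Real.cosh u / Real.sinh u) (-1 / Real.sinh u ^ 2) u := by
  have hs : 0 < Real.sinh u := Real.sinh_pos_iff.mpr hu
  refine ((Real.hasDerivAt_cosh u).div (Real.hasDerivAt_sinh u) hs.ne').congr_deriv ?_
  have := Real.cosh_sq u
  congr 1
  linarith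

lemma coth_lim : Tendsto (fun u => Real.cosh u / Real.sinh u) atTop (𝓝 1) := by
  have h0 : Tendsto (fun u:ℝ => Real.exp (-u)) atTop (𝓝 0) := Real.tendsto_exp_neg_atTop_nhds_zero
  have h1 : Tendsto (fun u:ℝ => (1 + Real.exp (-u) ^ 2) / (1 - Real.exp (-u) ^ 2)) atTop
      (𝓝 ((1 + 0 ^ 2) / (1 - 0 ^ 2))) :=
    ((h0.pow 2).const_add 1).div ((h0.pow 2).const_sub 1) (by norm_num)
  simp at h1
  refine h1.congr' ?_
  filter_upwards [eventually_gt_atTop 0] with u hu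
  have hs : 0 < Real.sinh u := Real.sinh_pos_iff.mpr hu
  have he : Real.exp (-u) < 1 := by rw [Real.exp_lt_one_iff]; linarith
  have hp := Real.exp_pos (-u)
  have : 0 < 1 - Real.exp (-u) ^ 2 := by nlinarith
  rw [div_eq_div_iff this.ne' hs.ne', Real.cosh_eq, Real.sinh_eq]
  have h2 : Real.exp u * Real.exp (-u) = 1 := by rw [← Real.exp_add]; simp
  linear_combination Real.exp (-u) * h2

lemma coth_bound {u : ℝ} (hu : 0 < u) : Real.cosh u / Real.sinh u - 1 ≤ 1 / u := by
  have hs : 0 < Real.sinh u := Real.sinh_pos_iff.mpr hu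
  have h1 : Real.cosh u - Real.sinh u = Real.exp (-u) := Real.cosh_sub_sinh u
  have h2 : u ≤ Real.sinh u := Real.self_le_sinh_iff.mpr hu.le
  have h3 : Real.exp (-u) ≤ 1 := by rw [Real.exp_le_one_iff]; linarith
  have : Real.cosh u / Real.sinh u - 1 = Real.exp (-u) / Real.sinh u := by
    rw [← h1]; field_simp
  rw [this]
  exact div_le_div₀ (by norm_num) h3 hu h2

lemma ell_bound (k : ℕ) {L : ℝ} (hL : Tendsto (ell k) atTop (𝓝 L)) {u : ℝ} (hu : 0 < u) :
    |ell k u - L| ≤ 9 / (((k:ℝ) + 1/2) * u) := by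
  have hκ : (0:ℝ) < k + 1/2 := by positivity
  have key : ∀ B σ : ℝ, (∀ v, 0 < v → 0 ≤ σ * Ef k v + B) →
      σ * ell k u ≤ σ * L + B / ((k:ℝ) + 1/2) * (Real.cosh u / Real.sinh u - 1) := by
    intro B σ hB
    have hd : ∀ v, 0 < v → HasDerivAt
        (fun v => σ * ell k v - B / ((k:ℝ) + 1/2) * (Real.cosh v / Real.sinh v))
        (σ * (Ef k v / (((k:ℝ) + 1/2) * Real.sinh v ^ 2))
          - B / ((k:ℝ) + 1/2) * (-1 / Real.sinh v ^ 2)) v :=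
      fun v hv => ((ell_deriv k hv).const_mul σ).sub ((coth_deriv hv).const_mul _)
    have hm : MonotoneOn
        (fun v => σ * ell k v - B / ((k:ℝ) + 1/2) * (Real.cosh v / Real.sinh v)) (Ioi 0) := by
      apply monotoneOn_of_deriv_nonneg (convex_Ioi 0)
      · exact fun v hv => (hd v hv).continuousAt.continuousWithinAt
      · rw [interior_Ioi]
        exact fun v hv => (hd v hv).differentiableAt.differentiableWithinAt
      · rw [interior_Ioi]
        intro v hv
        rw [(hd v hv).deriv]
        have hs : 0 < Real.sinh v := Real.sinh_pos_iff.mpr hv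
        have : σ * (Ef k v / (((k:ℝ) + 1/2) * Real.sinh v ^ 2))
            - B / ((k:ℝ) + 1/2) * (-1 / Real.sinh v ^ 2)
          = (σ * Ef k v + B) / (((k:ℝ) + 1/2) * Real.sinh v ^ 2) := by field_simp; ring
        rw [this]
        exact div_nonneg (hB v hv) (by positivity)
    have hl := (hL.const_mul σ).sub (coth_lim.const_mul (B / ((k:ℝ) + 1/2)))
    have := ge_of_tendsto hl (by
      filter_upwards [eventually_ge_atTop u] with v hv
      exact hm hu (show (0:ℝ) < v from hu.trans_le hv) hv)
    simp only [] at this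
    linarith
  have k1 := key 9 1 (fun v hv => by have := (Ef_bounds k hv).1; linarith)
  have k2 := key 9 (-1) (fun v hv => by have := (Ef_bounds k hv).2; linarith)
  have hb : 9 / ((k:ℝ) + 1/2) * (Real.cosh u / Real.sinh u - 1) ≤ 9 / (((k:ℝ) + 1/2) * u) := by
    calc _ ≤ 9 / ((k:ℝ) + 1/2) * (1 / u) :=
          mul_le_mul_of_nonneg_left (coth_bound hu) (by positivity)
      _ = _ := by field_simp
  rw [abs_le]
  constructor <;> linarith

noncomputable def hf (k : ℕ) (y : ℝ) : ℝ :=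
  ∑ m ∈ Finset.range (k + 1), (1 / (m.factorial : ℝ)) * (k.choose m : ℝ) * y ^ (k - m)

lemma hf_zero (k : ℕ) : hf k 0 = 1 / (k.factorial : ℝ) := by
  unfold hf
  rw [Finset.sum_range_succ, Finset.sum_eq_zero]
  · simp
  · intro m hm
    have := Finset.mem_range.mp hm
    rw [zero_pow (by omega)]; simp

lemma hf_cont (k : ℕ) : Continuous (hf k) := by unfold hf; fun_prop

lemma LY_hf (k : ℕ) {x : ℝ} (hx : 0 < x) : LY k x = x ^ k * hf k x⁻¹ := by
  unfold LY hf
  rw [Finset.mul_sum]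
  refine Finset.sum_congr rfl fun m hm => ?_
  have hm' : m ≤ k := by have := Finset.mem_range.mp hm; omega
  have : x ^ k = x ^ m * x ^ (k - m) := by rw [← pow_add]; congr 1; omega
  rw [this, inv_pow]
  field_simp

noncomputable def Lim (k : ℕ) : ℝ :=
  -((k:ℝ) + 1/2) + k * Real.log ((k:ℝ) + 1/2) + Real.log (1 / (k.factorial : ℝ))
    + 1/2 * Real.log (2 * Real.pi * ((k:ℝ) + 1/2))

lemma ell_lim (k : ℕ) : Tendsto (ell k) atTop (𝓝 (Lim k)) := by
  have hκ : (0:ℝ) < k + 1/2 := by positivity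
  have ht : Tendsto (fun u:ℝ => Real.exp (-u) ^ 2) atTop (𝓝 0) := by
    simpa using Real.tendsto_exp_neg_atTop_nhds_zero.pow 2
  have hx : Tendsto (fun u : ℝ => (xf k u)⁻¹) atTop (𝓝 0) := by
    apply Tendsto.inv_tendsto_atTop
    unfold xf
    apply Tendsto.const_mul_atTop (by positivity)
    apply (tendsto_pow_atTop (two_ne_zero)).comp
    exact tendsto_atTop_mono' _ (by
      filter_upwards [eventually_ge_atTop 0] with u hu
      exact Real.self_le_sinh_iff.mpr hu) tendsto_id
  have hh : Tendsto (fun u : ℝ => Real.log (hf k (xf k u)⁻¹)) atTop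
      (𝓝 (Real.log (1 / (k.factorial : ℝ)))) := by
    apply Tendsto.log
    · rw [← hf_zero]
      exact ((hf_cont k).tendsto 0).comp hx
    · positivity
  have hm : Tendsto (fun u:ℝ => Real.log (1 - Real.exp (-u) ^ 2)) atTop (𝓝 0) := by
    have := (ht.const_sub 1).log (by norm_num)
    simpa using this
  have hp : Tendsto (fun u:ℝ => Real.log (1 + Real.exp (-u) ^ 2)) atTop (𝓝 0) := by
    have := (ht.const_add 1).log (by norm_num)
    simpa using this
  have hall := ((((((ht.const_sub 1).const_mul (-((k:ℝ) + 1/2))).add_const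
    (k * Real.log ((k:ℝ) + 1/2))).add hh).add_const
      (1/2 * Real.log (2 * Real.pi * ((k:ℝ) + 1/2)))).add
      (hm.const_mul (2 * (k:ℝ) + 1/2))).add (hp.const_mul (1/2 : ℝ))
  have e : -((k:ℝ) + 1/2) * (1 - 0) + (k * Real.log ((k:ℝ) + 1/2)) + Real.log (1 / (k.factorial : ℝ))
    + 1/2 * Real.log (2 * Real.pi * ((k:ℝ) + 1/2)) + (2 * k + 1/2) * 0 + 1/2 * 0 = Lim k := by
    unfold Lim; ring
  rw [e] at hall
  refine hall.congr' ?_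
  filter_upwards [eventually_gt_atTop 0] with u hu
  have hs : 0 < Real.sinh u := Real.sinh_pos_iff.mpr hu
  have hc := Real.cosh_pos u
  have hx : 0 < xf k u := by unfold xf; positivity
  have hE : 0 < Real.exp (-u) := Real.exp_pos _
  have hE1 : Real.exp (-u) < 1 := by rw [Real.exp_lt_one_iff]; linarith
  have hm1 : 0 < 1 - Real.exp (-u) ^ 2 := by nlinarith
  have hEE : Real.exp u * Real.exp (-u) = 1 := by rw [← Real.exp_add]; simp
  have hsin : Real.sinh u = Real.exp u * (1 - Real.exp (-u) ^ 2) / 2 := by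
    rw [Real.sinh_eq]; linear_combination (Real.exp (-u) / 2) * hEE
  have hcos : Real.cosh u = Real.exp u * (1 + Real.exp (-u) ^ 2) / 2 := by
    rw [Real.cosh_eq]; linear_combination (-Real.exp (-u) / 2) * hEE
  have hpi := Real.pi_pos
  have l1 : Real.log (xf k u) = Real.log ((k:ℝ) + 1/2) + 2 * u + 2 * Real.log (1 - Real.exp (-u) ^ 2) := by
    have : xf k u = ((k:ℝ) + 1/2) * (Real.exp u ^ 2 * (1 - Real.exp (-u) ^ 2) ^ 2) := by
      unfold xf; rw [hsin]; ring
    rw [this, Real.log_mul hκ.ne' (by positivity), Real.log_mul (by positivity) (by positivity),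
      Real.log_pow, Real.log_pow, Real.log_exp]
    push_cast; ring
  have l2 : Real.log (4 * Real.pi * Qf k u) = Real.log (2 * Real.pi * ((k:ℝ) + 1/2)) + 2 * u
      + Real.log (1 - Real.exp (-u) ^ 2) + Real.log (1 + Real.exp (-u) ^ 2) := by
    have : 4 * Real.pi * Qf k u = (2 * Real.pi * ((k:ℝ) + 1/2)) * Real.exp u ^ 2 *
        (1 - Real.exp (-u) ^ 2) * (1 + Real.exp (-u) ^ 2) := by
      unfold Qf; rw [hsin, hcos]; ring
    rw [this, Real.log_mul (by positivity) (by positivity), Real.log_mul (by positivity) (by positivity),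
      Real.log_mul (by positivity) (by positivity), Real.log_pow, Real.log_exp]
    push_cast; ring
  have hhp : 0 < hf k (xf k u)⁻¹ := by
    have h1 := LY_hf k hx
    have h2 := LY_pos k hx.le
    rw [h1] at h2
    exact pos_of_mul_pos_right h2 (by positivity)
  have l3 : Real.log (LY k (xf k u)) = k * Real.log (xf k u) + Real.log (hf k (xf k u)⁻¹) := by
    rw [LY_hf k hx, Real.log_mul (by positivity) hhp.ne', Real.log_pow]
  have l4 : xf k u / 2 - ((k:ℝ) + 1/2) * (2 * (Real.sinh u * Real.cosh u)) =
      -((k:ℝ) + 1/2) * (1 - Real.exp (-u) ^ 2) := by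
    have h1 : Real.cosh u - Real.sinh u = Real.exp (-u) := Real.cosh_sub_sinh u
    have h2 : 2 * Real.sinh u * Real.exp (-u) = 1 - Real.exp (-u)^2 := by
      rw [hsin]; linear_combination (1 - Real.exp (-u) ^ 2) * hEE
    rw [← h2, ← h1]; unfold xf; ring
  unfold ell
  rw [l3, l1, l2]
  linear_combination -l4

lemma stirling_bound (k : ℕ) (hk : 1 ≤ k) : |Lim k| ≤ 1 / k := by
  have hk0 : (0:ℝ) < k := by exact_mod_cast hk
  have hpi := Real.pi_pos
  have hform := Stirling.log_stirlingSeq_formula k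
  have hlow : Real.log (√Real.pi) ≤ Real.log (Stirling.stirlingSeq k) :=
    Real.log_le_log (by positivity) (Stirling.sqrt_pi_le_stirlingSeq (by omega))
  have hup : Real.log (Stirling.stirlingSeq k) - 1 / (12 * k) ≤ Real.log (√Real.pi) := by
    have hlim : Tendsto (fun n : ℕ => Real.log (Stirling.stirlingSeq (n + 1)) - 1 / (12 * ((n + 1 : ℕ) : ℝ)))
        atTop (𝓝 (Real.log (√Real.pi) - 0)) := by
      apply Tendsto.sub
      · exact (Stirling.tendsto_stirlingSeq_sqrt_pi.comp (tendsto_add_atTop_nat 1)).log (by positivity)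
      · apply Tendsto.div_atTop tendsto_const_nhds
        apply Tendsto.const_mul_atTop (by norm_num)
        exact tendsto_natCast_atTop_atTop.comp (tendsto_add_atTop_nat 1)
    have hmono : Monotone (fun n : ℕ => Real.log (Stirling.stirlingSeq (n + 1)) - 1 / (12 * ((n + 1 : ℕ) : ℝ))) := by
      apply monotone_nat_of_le_succ
      intro n
      have h := Stirling.log_stirlingSeq_sdiff_le (n + 1)
      have e : 1 / (12 * ((n + 1 : ℕ) : ℝ) * (((n + 1 : ℕ) : ℝ) + 1)) =
          1 / (12 * ((n + 1 : ℕ) : ℝ)) - 1 / (12 * ((n + 1 + 1 : ℕ) : ℝ)) := by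
        push_cast; field_simp; ring
      rw [e] at h
      linarith
    have := hmono.ge_of_tendsto hlim (k - 1)
    simp only [Nat.sub_add_cancel hk, sub_zero] at this
    exact this
  rw [Real.log_sqrt hpi.le] at hlow hup
  have hκ : (0:ℝ) < k + 1/2 := by positivity
  have el : Real.log ((k:ℝ) + 1/2) = Real.log k + Real.log (1 + 1 / (2 * k)) := by
    rw [← Real.log_mul (by positivity) (by positivity)]; congr 1; field_simp
  have b1 : Real.log (1 + 1 / (2 * (k:ℝ))) ≤ 1 / (2 * k) := by
    have := Real.log_le_sub_one_of_pos (show (0:ℝ) < 1 + 1 / (2 * (k:ℝ)) by positivity); linarith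
  have b2 : 1 / (2 * (k:ℝ) + 1) ≤ Real.log (1 + 1 / (2 * (k:ℝ))) := by
    have := Real.one_sub_inv_le_log_of_pos (show (0:ℝ) < 1 + 1 / (2 * (k:ℝ)) by positivity)
    refine le_trans (le_of_eq ?_) this
    field_simp; ring
  have eL : Lim k = 1/2 * Real.log Real.pi - Real.log (Stirling.stirlingSeq k)
      + (((k:ℝ) + 1/2) * Real.log (1 + 1 / (2 * (k:ℝ))) - 1/2) := by
    unfold Lim
    rw [hform, Real.log_div one_ne_zero (by positivity), Real.log_one,
      Real.log_div (by positivity) (Real.exp_pos 1).ne', Real.log_exp,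
      Real.log_mul (by positivity) hκ.ne', Real.log_mul (by norm_num) hpi.ne',
      Real.log_mul (by norm_num) hk0.ne', el]
    ring
  have c1 : ((k:ℝ) + 1/2) * Real.log (1 + 1 / (2 * (k:ℝ))) ≤ 1/2 + 1 / (4 * k) := by
    refine (mul_le_mul_of_nonneg_left b1 hκ.le).trans (le_of_eq ?_)
    field_simp; ring
  have c2 : 1/2 ≤ ((k:ℝ) + 1/2) * Real.log (1 + 1 / (2 * (k:ℝ))) := by
    refine le_trans (le_of_eq ?_) (mul_le_mul_of_nonneg_left b2 hκ.le)
    field_simp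
  have i1 : 1 / (12 * (k:ℝ)) = 1/12 * (1 / k) := by field_simp
  have i2 : 1 / (4 * (k:ℝ)) = 1/4 * (1 / k) := by field_simp
  have i3 : 0 < 1 / (k:ℝ) := by positivity
  rw [eL, abs_le]
  constructor <;> linarith

lemma exp_ell (k : ℕ) {u : ℝ} (hu : 0 < u) :
    Real.exp (2 * ((k : ℝ) + 1 / 2) * Real.sinh u ^ 2) *
          Lag k (-4 * ((k : ℝ) + 1 / 2) * Real.sinh u ^ 2) *
          Real.sqrt (4 * Real.pi * ((k : ℝ) + 1 / 2) * Real.sinh (2 * u)) *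
          Real.exp (-((k : ℝ) + 1 / 2) * (2 * u + Real.sinh (2 * u))) = Real.exp (ell k u) := by
  have hs : 0 < Real.sinh u := Real.sinh_pos_iff.mpr hu
  have hc := Real.cosh_pos u
  have hx : 0 < xf k u := by unfold xf; positivity
  have hQ : 0 < Qf k u := by unfold Qf; positivity
  have hY := LY_pos k hx.le
  have hpi := Real.pi_pos
  have e1 : Lag k (-4 * ((k : ℝ) + 1 / 2) * Real.sinh u ^ 2) = LY k (xf k u) := by
    unfold Lag LY xf
    refine Finset.sum_congr rfl fun m _ => ?_
    congr 2; ring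
  have e2 : Real.sqrt (4 * Real.pi * ((k : ℝ) + 1 / 2) * Real.sinh (2 * u)) =
      Real.exp (1/2 * Real.log (4 * Real.pi * Qf k u)) := by
    rw [Real.sqrt_eq_rpow, Real.rpow_def_of_pos, Real.sinh_two_mul]
    · unfold Qf
      congr 1
      rw [mul_comm]
      congr 2; ring
    · rw [Real.sinh_two_mul]; positivity
  rw [e1, e2, ← Real.exp_log hY, ← Real.exp_add, ← Real.exp_add, ← Real.exp_add,
    Real.sinh_two_mul]
  unfold ell
  congr 1
  have : 2 * ((k : ℝ) + 1 / 2) * Real.sinh u ^ 2 = xf k u / 2 := by unfold xf; ring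
  rw [this]
  ring

lemma abs_exp_sub_one_le' (x : ℝ) : |Real.exp x - 1| ≤ |x| * Real.exp |x| := by
  have h1 := Real.add_one_le_exp x
  have h2 := Real.add_one_le_exp (-x)
  have hp := Real.exp_pos x
  have hpp : Real.exp x * Real.exp (-x) = 1 := by rw [← Real.exp_add]; simp
  have h3 : 1 ≤ Real.exp |x| := Real.one_le_exp (abs_nonneg x)
  rw [abs_le]
  rcases le_total 0 x with h | h
  · rw [abs_of_nonneg h] at *
    constructor <;> nlinarith
  · rw [abs_of_nonpos h] at *
    have : Real.exp x ≤ 1 := Real.exp_le_one_iff.mpr h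
    constructor <;> nlinarith

/-- Sharp Laplace-method asymptotics: for `p₁, p₂ > 0` with `p₁ + p₂ < 1/2`, there are
`K, C > 0` such that for `k ≥ K` and `(3/8) k₁^{-2p₂} ≤ u ≤ p₂ log k₁` (with `k₁ = k + 1/2`),
the spectral projection norm `e^{2k₁ sinh²u} L_k(-4k₁ sinh²u)` equals
`(4π k₁ sinh 2u)^{-1/2} e^{k₁(2u + sinh 2u)}` up to a relative error `≤ C k₁^{-p₁}`. -/
theorem projection_norm_sharp_asymptotics (p₁ p₂ : ℝ) (hp₁ : 0 < p₁) (hp₂ : 0 < p₂)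
    (hsum : p₁ + p₂ < 1 / 2) :
    ∃ K C : ℝ, 0 < K ∧ 0 < C ∧ ∀ k : ℕ, K ≤ (k : ℝ) → ∀ u : ℝ,
      3 / 8 * ((k : ℝ) + 1 / 2) ^ (-(2 * p₂)) ≤ u →
      u ≤ p₂ * Real.log ((k : ℝ) + 1 / 2) →
      |Real.exp (2 * ((k : ℝ) + 1 / 2) * Real.sinh u ^ 2) *
          Lag k (-4 * ((k : ℝ) + 1 / 2) * Real.sinh u ^ 2) *
          Real.sqrt (4 * Real.pi * ((k : ℝ) + 1 / 2) * Real.sinh (2 * u)) *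
          Real.exp (-((k : ℝ) + 1 / 2) * (2 * u + Real.sinh (2 * u))) - 1| ≤
        C * ((k : ℝ) + 1 / 2) ^ (-p₁) := by
  refine ⟨1, 26 * Real.exp 26, one_pos, by positivity, ?_⟩
  intro k hk u hu _
  have hk1 : 1 ≤ k := by exact_mod_cast hk
  have hκ : (0:ℝ) < k + 1/2 := by positivity
  have hκ1 : (1:ℝ) ≤ k + 1/2 := by linarith
  have hu0 : 0 < u := lt_of_lt_of_le (by positivity) hu
  rw [exp_ell k hu0]
  have hb := ell_bound k (ell_lim k) hu0
  have hst := stirling_bound k hk1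
  have hdec : ((k:ℝ) + 1/2) ^ (-p₁) ≤ 1 := Real.rpow_le_one_of_one_le_of_nonpos hκ1 (by linarith)
  have hP : 0 < ((k:ℝ) + 1/2) ^ (-p₁) := by positivity
  have h1 : 9 / (((k:ℝ) + 1/2) * u) ≤ 24 * ((k:ℝ) + 1/2) ^ (-p₁) := by
    have ha : ((k:ℝ) + 1/2) * (3 / 8 * ((k : ℝ) + 1 / 2) ^ (-(2 * p₂))) ≤ ((k:ℝ) + 1/2) * u :=
      mul_le_mul_of_nonneg_left hu hκ.le
    have hb2 : ((k:ℝ) + 1/2) ^ p₁ ≤ ((k:ℝ) + 1/2) * ((k : ℝ) + 1 / 2) ^ (-(2 * p₂)) := by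
      have : ((k:ℝ) + 1/2) * ((k : ℝ) + 1 / 2) ^ (-(2 * p₂)) = ((k:ℝ) + 1/2) ^ (1 + -(2 * p₂)) := by
        rw [Real.rpow_add hκ, Real.rpow_one]
      rw [this]
      exact Real.rpow_le_rpow_of_exponent_le hκ1 (by linarith)
    have hpp : 0 < ((k:ℝ) + 1/2) ^ p₁ := by positivity
    rw [Real.rpow_neg hκ.le, ← div_eq_mul_inv, div_le_div_iff₀ (by positivity) hpp]
    nlinarith
  have h2 : 1 / (k:ℝ) ≤ 2 * ((k:ℝ) + 1/2) ^ (-p₁) := by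
    have : ((k:ℝ) + 1/2) ^ (-1:ℝ) ≤ ((k:ℝ) + 1/2) ^ (-p₁) :=
      Real.rpow_le_rpow_of_exponent_le hκ1 (by linarith)
    rw [Real.rpow_neg_one] at this
    refine le_trans ?_ (mul_le_mul_of_nonneg_left this (by norm_num))
    rw [← div_eq_mul_inv, div_le_div_iff₀ (by linarith) hκ]
    linarith
  have h3 : |ell k u| ≤ 26 * ((k:ℝ) + 1/2) ^ (-p₁) := by
    have := abs_add_le (ell k u - Lim k) (Lim k)
    rw [sub_add_cancel] at this
    linarith
  have h4 : |ell k u| ≤ 26 := by linarith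
  calc _ ≤ |ell k u| * Real.exp |ell k u| := abs_exp_sub_one_le' _
    _ ≤ (26 * ((k:ℝ) + 1/2) ^ (-p₁)) * Real.exp 26 := by gcongr
    _ = _ := by ring
end

section
/- Let k ∈ ℕ with k ≥ 1, let r, γ > 0, let A > 1, and let Θ ∈ (0, π/3]. Set T = Θ·√A/(1 + A) and A₁ = √(π/(k·r·γ))·(r + γ)^{2k+1}. If r/γ ∈ [1/A, A], then (cos Θ)^{1/2}·(1 − (1/(T·√(2πk)))·e^{−kT²/2}) ≤ (1/A₁)·∫_{−π}^{π} (r² + γ² + 2γr·cos θ)^k dθ ≤ (cos Θ)^{−1/2} + (2/3)·√(πk)·e^{−(9/π²)·kT²}. -/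
open MeasureTheory

lemma aux_v_ge_cos {Θ θ : ℝ} (hΘ : Θ ≤ Real.pi / 3) (h0 : 0 ≤ θ) (h1 : θ ≤ Θ) :
    Real.cos Θ * θ ^ 2 ≤ 2 * (1 - Real.cos θ) := by
  have hpi := Real.pi_pos
  have hc : Real.cos Θ ≤ Real.cos θ :=
    Real.cos_le_cos_of_nonneg_of_le_pi h0 (by linarith) h1
  have e : Real.cos θ = 2 * Real.cos (θ / 2) ^ 2 - 1 := by
    rw [← Real.cos_two_mul]; congr 1; ring
  have hcp : 0 < Real.cos (θ / 2) := Real.cos_pos_of_mem_Ioo ⟨by linarith, by linarith⟩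
  have ht := Real.le_tan (x := θ / 2) (by linarith) (by linarith)
  rw [Real.tan_eq_sin_div_cos, le_div_iff₀ hcp] at ht
  have h2 : (θ / 2 * Real.cos (θ / 2)) ^ 2 ≤ Real.sin (θ / 2) ^ 2 := by
    gcongr
  have h3 := Real.sin_sq_add_cos_sq (θ / 2)
  have h4 := Real.cos_sq_le_one (θ / 2)
  have h5 : Real.cos Θ ≤ Real.cos (θ / 2) ^ 2 := by linarith
  have h6 := mul_le_mul_of_nonneg_right h5 (sq_nonneg θ)
  nlinarith

lemma aux_v_ge_beta {θ : ℝ} (h0 : 0 ≤ θ) (h1 : θ ≤ Real.pi / 3) :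
    9 / Real.pi ^ 2 * θ ^ 2 ≤ 2 * (1 - Real.cos θ) := by
  have hpi := Real.pi_pos
  have e : Real.cos θ = 2 * Real.cos (θ / 2) ^ 2 - 1 := by
    rw [← Real.cos_two_mul]; congr 1; ring
  have h3 := Real.sin_sq_add_cos_sq (θ / 2)
  have hs : 3 / Real.pi * (θ / 2) ≤ Real.sin (θ / 2) := by
    have := strictConcaveOn_sin_Icc.concaveOn.2
      (show (0 : ℝ) ∈ Set.Icc 0 Real.pi from ⟨le_rfl, hpi.le⟩)
      (show Real.pi / 6 ∈ Set.Icc 0 Real.pi from ⟨by positivity, by linarith⟩)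
      (show 0 ≤ 1 - 3 * θ / Real.pi by rw [sub_nonneg, div_le_one hpi]; linarith) (show 0 ≤ 3 * θ / Real.pi by positivity) (by ring)
    simp only [smul_eq_mul, Real.sin_zero, mul_zero, zero_add, Real.sin_pi_div_six] at this
    have e2 : 3 * θ / Real.pi * (Real.pi / 6) = θ / 2 := by field_simp; ring
    rw [e2] at this
    calc _ = 3 * θ / Real.pi * (1 / 2) := by ring
      _ ≤ _ := this
  have h2 : (3 / Real.pi * (θ / 2)) ^ 2 ≤ Real.sin (θ / 2) ^ 2 := by
    gcongr
  have e3 : (3 / Real.pi * (θ / 2)) ^ 2 = 9 / Real.pi ^ 2 * θ ^ 2 / 4 := by ring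
  linarith

lemma aux_v_ge_one {θ : ℝ} (h0 : Real.pi / 3 ≤ θ) (h1 : θ ≤ Real.pi) :
    1 ≤ 2 * (1 - Real.cos θ) := by
  have := Real.cos_le_cos_of_nonneg_of_le_pi (by positivity) h1 h0
  rw [Real.cos_pi_div_three] at this
  linarith

lemma aux_pow_le {k : ℕ} {s v w : ℝ} (hs : 0 ≤ s) (hs4 : s ≤ 1 / 4) (hv4 : v ≤ 4)
    (hw : w ≤ v) : (1 - s * v) ^ k ≤ Real.exp (-(k * s) * w) := by
  have h1 : 0 ≤ 1 - s * v := by nlinarith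
  have h2 : 1 - s * v ≤ Real.exp (-(s * v)) := by
    have := Real.add_one_le_exp (-(s * v)); linarith
  calc (1 - s * v) ^ k ≤ (Real.exp (-(s * v))) ^ k := by gcongr
    _ = Real.exp (-(k * s) * v) := by rw [← Real.exp_nat_mul]; congr 1; ring
    _ ≤ _ := by
      apply Real.exp_le_exp.2
      have : (k * s) * w ≤ (k * s) * v := by gcongr
      linarith

lemma aux_pow_ge {k : ℕ} {s Θ θ : ℝ} (hs : 0 ≤ s) (hs4 : s ≤ 1 / 4)
    (hΘ : Θ ≤ Real.pi / 3) (h0 : 0 ≤ θ) (h1 : θ ≤ Θ) :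
    Real.exp (-(k * s / Real.cos Θ) * θ ^ 2) ≤ (1 - s * (2 * (1 - Real.cos θ))) ^ k := by
  have hpi := Real.pi_pos
  have hc : Real.cos Θ ≤ Real.cos θ :=
    Real.cos_le_cos_of_nonneg_of_le_pi h0 (by linarith) h1
  have hcp : 0 < Real.cos Θ := Real.cos_pos_of_mem_Ioo ⟨by linarith, by linarith⟩
  have hc1 := Real.cos_le_one θ
  have hq := Real.one_sub_sq_div_two_le_cos (x := θ)
  set v := 2 * (1 - Real.cos θ) with hv
  have hv0 : 0 ≤ v := by linarith
  have hq1 : Real.cos Θ ≤ 1 - s * v := by nlinarith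
  have hq0 : 0 < 1 - s * v := by linarith
  have hvθ : v ≤ θ ^ 2 := by linarith
  have key : Real.exp (-(s * θ ^ 2 / Real.cos Θ)) ≤ 1 - s * v := by
    rw [Real.exp_neg]
    apply inv_le_of_inv_le₀ hq0
    have a1 : (1 - s * v)⁻¹ = 1 + s * v / (1 - s * v) := by field_simp; ring
    have a2 : s * v / (1 - s * v) ≤ s * θ ^ 2 / Real.cos Θ := by gcongr
    have := Real.add_one_le_exp (s * θ ^ 2 / Real.cos Θ)
    linarith
  calc _ = (Real.exp (-(s * θ ^ 2 / Real.cos Θ))) ^ k := by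
        rw [← Real.exp_nat_mul]; congr 1; ring
    _ ≤ _ := by gcongr

lemma aux_gauss_le {b x : ℝ} (hb : 0 < b) (hx : 0 ≤ x) :
    ∫ t in (0 : ℝ)..x, Real.exp (-b * t ^ 2) ≤ Real.sqrt (Real.pi / b) / 2 := by
  rw [← integral_gaussian_Ioi, intervalIntegral.integral_of_le hx]
  apply setIntegral_mono_set (integrable_exp_neg_mul_sq hb).integrableOn
  · exact Filter.Eventually.of_forall fun t => (Real.exp_pos _).le
  · exact Set.Ioc_subset_Ioi_self.eventuallyLE

lemma aux_erf {x : ℝ} (hx : 0 < x) :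
    1 - 1 / (x * Real.sqrt (2 * Real.pi)) * Real.exp (-x ^ 2 / 2) ≤
      2 / Real.sqrt Real.pi * ∫ t in (0 : ℝ)..x, Real.exp (-1 * t ^ 2) := by
  have hpi := Real.pi_pos
  have hsp : 0 < Real.sqrt Real.pi := Real.sqrt_pos.2 hpi
  have hs2 : 0 < Real.sqrt 2 := by positivity
  have hmul : Real.sqrt (2 * Real.pi) = Real.sqrt 2 * Real.sqrt Real.pi :=
    Real.sqrt_mul (by norm_num) _
  have hsq2 : Real.sqrt 2 ^ 2 = 2 := Real.sq_sqrt (by norm_num)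
  rcases le_total (7 / 10) (x ^ 2) with h | h
  · have hi := integrable_exp_neg_mul_sq (b := 1) one_pos
    have hsum := intervalIntegral.integral_interval_add_Ioi (a := 0) (b := x)
      hi.integrableOn hi.integrableOn
    rw [integral_gaussian_Ioi, div_one] at hsum
    have htail : ∫ t in Set.Ioi x, Real.exp (-1 * t ^ 2) ≤ Real.exp (-x ^ 2) / (2 * x) := by
      have hneg : -(2 * x) < 0 := by linarith
      have hI := integrableOn_exp_mul_Ioi hneg x
      calc ∫ t in Set.Ioi x, Real.exp (-1 * t ^ 2)
          ≤ ∫ t in Set.Ioi x, Real.exp (x ^ 2) * Real.exp (-(2 * x) * t) := by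
            apply integral_mono hi.integrableOn (hI.const_mul _)
            intro t
            simp only
            rw [← Real.exp_add]
            apply Real.exp_le_exp.2
            nlinarith [sq_nonneg (t - x)]
        _ = Real.exp (-x ^ 2) / (2 * x) := by
            rw [integral_const_mul, integral_exp_mul_Ioi hneg, neg_div_neg_eq, ← mul_div_assoc,
              ← Real.exp_add]
            congr 2; ring
    have hE : Real.sqrt 2 * Real.exp (-x ^ 2 / 2) ≤ 1 := by
      have h2 : 2 ≤ Real.exp (x ^ 2) := by
        rw [← Real.log_le_iff_le_exp (by norm_num)]
        have := Real.log_two_lt_d9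
        linarith
      have h3 : Real.exp (-x ^ 2 / 2) ^ 2 * Real.exp (x ^ 2) = 1 := by
        rw [← Real.exp_nat_mul, ← Real.exp_add]
        simp; ring
      have h4 : (Real.sqrt 2 * Real.exp (-x ^ 2 / 2)) ^ 2 ≤ 1 := by
        rw [mul_pow, hsq2]
        nlinarith [sq_nonneg (Real.exp (-x ^ 2 / 2))]
      exact (sq_le_one_iff₀ (by positivity)).1 h4
    have hee : Real.exp (-x ^ 2) = Real.exp (-x ^ 2 / 2) * Real.exp (-x ^ 2 / 2) := by
      rw [← Real.exp_add]; congr 1; ring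
    have hfin : 2 / Real.sqrt Real.pi * (Real.exp (-x ^ 2) / (2 * x)) ≤
        1 / (x * Real.sqrt (2 * Real.pi)) * Real.exp (-x ^ 2 / 2) := by
      rw [hmul, hee]
      have : 2 / Real.sqrt Real.pi * (Real.exp (-x ^ 2 / 2) * Real.exp (-x ^ 2 / 2) / (2 * x)) =
        1 / (x * (Real.sqrt 2 * Real.sqrt Real.pi)) * Real.exp (-x ^ 2 / 2) *
          (Real.sqrt 2 * Real.exp (-x ^ 2 / 2)) := by field_simp
      rw [this]
      exact mul_le_of_le_one_right (by positivity) hE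
    have h5 : ∫ t in (0 : ℝ)..x, Real.exp (-1 * t ^ 2) =
      Real.sqrt Real.pi / 2 - ∫ t in Set.Ioi x, Real.exp (-1 * t ^ 2) := by linarith
    rw [h5, mul_sub]
    have h6 : 2 / Real.sqrt Real.pi * (Real.sqrt Real.pi / 2) = 1 := by field_simp
    rw [h6]
    have h7 := mul_le_mul_of_nonneg_left htail (by positivity : 0 ≤ 2 / Real.sqrt Real.pi)
    linarith
  · have hE : x - x ^ 3 / 3 ≤ ∫ t in (0 : ℝ)..x, Real.exp (-1 * t ^ 2) := by
      have : ∫ t in (0 : ℝ)..x, (1 - t ^ 2) = x - x ^ 3 / 3 := by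
        rw [intervalIntegral.integral_sub (by simp) (by apply Continuous.intervalIntegrable; fun_prop)]
        simp; norm_num
      rw [← this]
      apply intervalIntegral.integral_mono_on hx.le
      · apply Continuous.intervalIntegrable; fun_prop
      · apply Continuous.intervalIntegrable; fun_prop
      · intro t _
        have := Real.add_one_le_exp (-1 * t ^ 2)
        linarith
    set E := ∫ t in (0 : ℝ)..x, Real.exp (-1 * t ^ 2)
    have he := Real.add_one_le_exp (-x ^ 2 / 2)
    set e := Real.exp (-x ^ 2 / 2)
    have hS : Real.sqrt (2 * Real.pi) ≤ 2.51 := by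
      apply Real.sqrt_le_iff.2
      have := Real.pi_lt_d2
      constructor <;> norm_num; linarith
    have h2 : 1.414 ≤ Real.sqrt 2 := Real.le_sqrt_of_sq_le (by norm_num)
    have hmain : x * Real.sqrt (2 * Real.pi) - e ≤ 2 * Real.sqrt 2 * (x * E) := by
      have a1 : x * Real.sqrt (2 * Real.pi) ≤ x * 2.51 := by gcongr
      have a2 : x * (x - x ^ 3 / 3) ≤ x * E := by gcongr
      have a3 : 0 ≤ x * (x - x ^ 3 / 3) := by nlinarith [sq_nonneg x]
      have a4 : 2 * 1.414 * (x * (x - x ^ 3 / 3)) ≤ 2 * Real.sqrt 2 * (x * E) := by gcongr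
      have a5 : x ^ 4 ≤ 7 / 10 * x ^ 2 := by nlinarith [sq_nonneg x]
      nlinarith [sq_nonneg (x - 0.7524)]
    have hSp : 0 < Real.sqrt (2 * Real.pi) := by positivity
    have e1 : 1 - 1 / (x * Real.sqrt (2 * Real.pi)) * e =
        (x * Real.sqrt (2 * Real.pi) - e) / (x * Real.sqrt (2 * Real.pi)) := by field_simp
    have e2 : 2 / Real.sqrt Real.pi * E = 2 * Real.sqrt 2 * (x * E) / (x * Real.sqrt (2 * Real.pi)) := by
      rw [hmul]; field_simp
    rw [e1, e2]
    gcongr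

/-- half integral, lower bound -/
lemma aux_lower {k : ℕ} (hk : 1 ≤ k) {s Θ T : ℝ} (hs : 0 < s) (hs4 : s ≤ 1 / 4)
    (hΘ0 : 0 < Θ) (hΘ : Θ ≤ Real.pi / 3) (hT0 : 0 < T) (hT : T ≤ Θ * Real.sqrt s) :
    Real.sqrt (Real.cos Θ) * (1 - 1 / (T * Real.sqrt (2 * Real.pi * k)) *
      Real.exp (-(k : ℝ) * T ^ 2 / 2)) ≤
    Real.sqrt (k * s / Real.pi) *
      (2 * ∫ θ in (0 : ℝ)..Real.pi, (1 - s * (2 * (1 - Real.cos θ))) ^ k) := by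
  have hpi := Real.pi_pos
  have hk0 : (0 : ℝ) < k := by exact_mod_cast hk
  have hcp : 0 < Real.cos Θ := Real.cos_pos_of_mem_Ioo ⟨by linarith, by linarith⟩
  have hc1 := Real.cos_le_one Θ
  set c := Real.cos Θ with hcdef
  have hsk : 0 < Real.sqrt k := Real.sqrt_pos.2 hk0
  have hsp : 0 < Real.sqrt Real.pi := Real.sqrt_pos.2 hpi
  have hss : 0 < Real.sqrt s := Real.sqrt_pos.2 hs
  have hsc : 0 < Real.sqrt c := Real.sqrt_pos.2 hcp
  have hsc1 : Real.sqrt c ≤ 1 := Real.sqrt_le_one.2 hc1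
  have hnn : ∀ θ : ℝ, 0 ≤ (1 - s * (2 * (1 - Real.cos θ))) ^ k := by
    intro θ
    apply pow_nonneg
    nlinarith [Real.neg_one_le_cos θ, Real.cos_le_one θ]
  set a := Real.sqrt k * Real.sqrt s / Real.sqrt c with ha
  have hap : 0 < a := by positivity
  have ha2 : a ^ 2 = k * s / c := by
    rw [ha, div_pow, mul_pow, Real.sq_sqrt hk0.le, Real.sq_sqrt hs.le, Real.sq_sqrt hcp.le]
  have hx0 : 0 < T * Real.sqrt k := by positivity
  have hxa : T * Real.sqrt k ≤ a * Θ := by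
    calc T * Real.sqrt k ≤ Θ * Real.sqrt s * Real.sqrt k := by gcongr
      _ ≤ Θ * Real.sqrt s * Real.sqrt k / Real.sqrt c := le_div_self (by positivity) hsc hsc1
      _ = a * Θ := by rw [ha]; ring
  have h1 : a⁻¹ * ∫ t in (0 : ℝ)..(T * Real.sqrt k), Real.exp (-1 * t ^ 2) ≤
      ∫ θ in (0 : ℝ)..Real.pi, (1 - s * (2 * (1 - Real.cos θ))) ^ k := by
    have i1 : ∫ t in (0 : ℝ)..(T * Real.sqrt k), Real.exp (-1 * t ^ 2) ≤
        ∫ t in (0 : ℝ)..(a * Θ), Real.exp (-1 * t ^ 2) := by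
      apply intervalIntegral.integral_mono_interval le_rfl hx0.le hxa
      · exact Filter.Eventually.of_forall fun t => (Real.exp_pos _).le
      · apply Continuous.intervalIntegrable; fun_prop
    have i2 := intervalIntegral.integral_comp_mul_left (a := 0) (b := Θ)
      (fun t => Real.exp (-1 * t ^ 2)) hap.ne'
    rw [mul_zero, smul_eq_mul] at i2
    calc _ ≤ a⁻¹ * ∫ t in (0 : ℝ)..(a * Θ), Real.exp (-1 * t ^ 2) := by gcongr
      _ = ∫ t in (0 : ℝ)..Θ, Real.exp (-1 * (a * t) ^ 2) := i2.symm
      _ ≤ ∫ θ in (0 : ℝ)..Θ, (1 - s * (2 * (1 - Real.cos θ))) ^ k := by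
        apply intervalIntegral.integral_mono_on hΘ0.le
        · apply Continuous.intervalIntegrable; fun_prop
        · apply Continuous.intervalIntegrable; fun_prop
        · intro t ht
          have := aux_pow_ge (k := k) hs.le hs4 hΘ ht.1 ht.2
          rw [← hcdef, ← ha2] at this
          convert this using 2; ring
      _ ≤ _ := by
        apply intervalIntegral.integral_mono_interval le_rfl hΘ0.le (by linarith)
        · exact Filter.Eventually.of_forall fun t => hnn t
        · apply Continuous.intervalIntegrable; fun_prop
  have h2 := aux_erf hx0
  have e1 : T * Real.sqrt k * Real.sqrt (2 * Real.pi) = T * Real.sqrt (2 * Real.pi * k) := by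
    rw [Real.sqrt_mul (by positivity) (k : ℝ)]; ring
  have e2 : -(T * Real.sqrt k) ^ 2 / 2 = -(k : ℝ) * T ^ 2 / 2 := by
    rw [mul_pow, Real.sq_sqrt hk0.le]; ring
  rw [e1, e2] at h2
  have e3 : Real.sqrt (k * s / Real.pi) = Real.sqrt k * Real.sqrt s / Real.sqrt Real.pi := by
    rw [Real.sqrt_div (by positivity), Real.sqrt_mul hk0.le]
  calc _ ≤ Real.sqrt c * (2 / Real.sqrt Real.pi *
        ∫ t in (0 : ℝ)..(T * Real.sqrt k), Real.exp (-1 * t ^ 2)) := by gcongr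
    _ = Real.sqrt (k * s / Real.pi) * (2 * (a⁻¹ *
        ∫ t in (0 : ℝ)..(T * Real.sqrt k), Real.exp (-1 * t ^ 2))) := by
      rw [e3, ha]; field_simp
    _ ≤ _ := by gcongr

lemma aux_exists_K {u Θ : ℝ} (hu : 0 < u) (hΘ0 : 0 < Θ) (hΘ : Θ ≤ Real.pi / 3) :
    ∃ K : ℝ, 0 ≤ K ∧ K + Real.exp (-u) ≤ Real.exp (-(9 / Real.pi ^ 2) * u * Θ ^ 2) ∧
      ∀ θ, Θ ≤ θ → θ ≤ Real.pi / 3 → Real.exp (-u * (9 / Real.pi ^ 2 * θ ^ 2)) ≤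
        Real.exp (-(u * Real.cos Θ) * θ ^ 2) +
          K * Real.exp (-(u * (9 / Real.pi ^ 2)) * (θ - Θ) ^ 2) := by
  have hpi := Real.pi_pos
  have hpi3 := Real.pi_gt_three
  have hpid := Real.pi_lt_d2
  have hββ : 9 / Real.pi ^ 2 * (Real.pi ^ 2 / 9) = 1 := by field_simp
  have hβ0 : 0 < 9 / Real.pi ^ 2 := by positivity
  have hβ9 : 0.9 ≤ 9 / Real.pi ^ 2 := by
    rw [le_div_iff₀ (by positivity)]; nlinarith
  have hsqle : ∀ θ, Θ ≤ θ → θ ≤ Real.pi / 3 → θ ^ 2 ≤ Real.pi ^ 2 / 9 := by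
    intro θ h1 h2
    have : θ ^ 2 ≤ (Real.pi / 3) ^ 2 := by
      have : 0 ≤ θ := by linarith
      gcongr
    linarith
  have hcosq := Real.cos_le_one_sub_mul_cos_sq (x := Θ) (by rw [abs_of_pos hΘ0]; linarith)
  have e9 : 9 / Real.pi ^ 2 * Θ ^ 2 = 4.5 * (2 / Real.pi ^ 2 * Θ ^ 2) := by ring
  have hc1 := Real.cos_le_one Θ
  set β := 9 / Real.pi ^ 2 with hβ
  set c := Real.cos Θ with hc
  rcases le_total c β with h | h
  · refine ⟨0, le_rfl, ?_, ?_⟩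
    · rw [zero_add]
      apply Real.exp_le_exp.2
      have h1 := hsqle Θ le_rfl hΘ
      have : β * Θ ^ 2 ≤ 1 := by nlinarith
      nlinarith
    · intro θ h1 h2
      rw [zero_mul, add_zero]
      apply Real.exp_le_exp.2
      have : c * θ ^ 2 ≤ β * θ ^ 2 := by gcongr
      nlinarith
  · set δ := Real.pi ^ 2 / 9 - 1 with hδ
    have hδ0 : 0 ≤ δ := by rw [hδ]; nlinarith
    have hδ1 : δ ≤ 0.2 := by rw [hδ]; nlinarith
    refine ⟨(1 - Real.exp (-(δ * u))) * Real.exp (-β * u * Θ ^ 2), ?_, ?_, ?_⟩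
    · apply mul_nonneg _ (Real.exp_pos _).le
      rw [sub_nonneg, Real.exp_le_one_iff]
      have := mul_nonneg hδ0 hu.le
      linarith
    · have : Real.exp (-u) ≤ Real.exp (-(δ * u)) * Real.exp (-β * u * Θ ^ 2) := by
        rw [← Real.exp_add]
        apply Real.exp_le_exp.2
        have : β * Θ ^ 2 + δ ≤ 1 := by linarith
        nlinarith
      linarith
    · intro θ h1 h2
      have g1 : Real.exp (-u * (β * θ ^ 2)) ≤
          Real.exp (-β * u * Θ ^ 2) * Real.exp (-(u * β) * (θ - Θ) ^ 2) := by
        rw [← Real.exp_add]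
        apply Real.exp_le_exp.2
        have : 0 ≤ u * β * (2 * Θ * (θ - Θ)) := by
          have : 0 ≤ θ - Θ := by linarith
          positivity
        nlinarith
      have g2 : Real.exp (-u * (β * θ ^ 2)) * Real.exp (-(δ * u)) ≤
          Real.exp (-(u * c) * θ ^ 2) := by
        rw [← Real.exp_add]
        apply Real.exp_le_exp.2
        have h3 := hsqle θ h1 h2
        have h4 : (c - β) * θ ^ 2 ≤ δ := by
          calc (c - β) * θ ^ 2 ≤ (1 - β) * (Real.pi ^ 2 / 9) := by
                apply mul_le_mul (by linarith) h3 (sq_nonneg _)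
                linarith
            _ = δ := by rw [hδ]; linarith
        nlinarith
      have g3 : 0 ≤ 1 - Real.exp (-(δ * u)) := by
        rw [sub_nonneg, Real.exp_le_one_iff]
        have := mul_nonneg hδ0 hu.le
        linarith
      have g4 := mul_le_mul_of_nonneg_left g1 g3
      linarith

set_option maxHeartbeats 1000000 in
/-- half integral, upper bound -/
lemma aux_upper {k : ℕ} (hk : 1 ≤ k) {s Θ T : ℝ} (hs : 0 < s) (hs4 : s ≤ 1 / 4)
    (hΘ0 : 0 < Θ) (hΘ : Θ ≤ Real.pi / 3) (hT0 : 0 < T) (hT : T ≤ Θ * Real.sqrt s) :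
    Real.sqrt (k * s / Real.pi) *
      (2 * ∫ θ in (0 : ℝ)..Real.pi, (1 - s * (2 * (1 - Real.cos θ))) ^ k) ≤
    (Real.sqrt (Real.cos Θ))⁻¹ + 2 / 3 * Real.sqrt (Real.pi * k) *
          Real.exp (-(9 / Real.pi ^ 2) * k * T ^ 2) := by
  have hpi := Real.pi_pos
  have hpi4 := Real.pi_le_four
  have hk1 : (1 : ℝ) ≤ k := by exact_mod_cast hk
  have hk0 : (0 : ℝ) < k := by linarith
  have hcp : 0 < Real.cos Θ := Real.cos_pos_of_mem_Ioo ⟨by linarith, by linarith⟩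
  have hu : 0 < k * s := by positivity
  obtain ⟨K, hK0, hK1, hK2⟩ := aux_exists_K hu hΘ0 hΘ
  have hv4 : ∀ θ : ℝ, 2 * (1 - Real.cos θ) ≤ 4 := fun θ => by
    linarith [Real.neg_one_le_cos θ]
  have hcont : ∀ a b : ℝ, IntervalIntegrable
      (fun θ => (1 - s * (2 * (1 - Real.cos θ))) ^ k) volume a b := by
    intro a b; apply Continuous.intervalIntegrable; fun_prop
  have hgc : ∀ m d a b : ℝ, IntervalIntegrable
      (fun θ => Real.exp (-m * (θ - d) ^ 2)) volume a b := by
    intro m d a b; apply Continuous.intervalIntegrable; fun_prop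
  have hg0 : ∀ m a b : ℝ, IntervalIntegrable
      (fun θ => Real.exp (-m * θ ^ 2)) volume a b := by
    intro m a b; apply Continuous.intervalIntegrable; fun_prop
  set F : ℝ → ℝ := fun θ => (1 - s * (2 * (1 - Real.cos θ))) ^ k with hF
  have i1 : ∫ θ in (0 : ℝ)..Θ, F θ ≤
      ∫ θ in (0 : ℝ)..Θ, Real.exp (-(k * s * Real.cos Θ) * θ ^ 2) := by
    apply intervalIntegral.integral_mono_on hΘ0.le (hcont _ _) (hg0 _ _ _)
    intro θ hθ
    have := aux_pow_le (k := k) hs.le hs4 (hv4 θ) (aux_v_ge_cos hΘ hθ.1 hθ.2)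
    convert this using 2; ring
  have i2 : ∫ θ in Θ..(Real.pi / 3), F θ ≤
      (∫ θ in Θ..(Real.pi / 3), Real.exp (-(k * s * Real.cos Θ) * θ ^ 2)) +
       K * ∫ θ in Θ..(Real.pi / 3), Real.exp (-(k * s * (9 / Real.pi ^ 2)) * (θ - Θ) ^ 2) := by
    rw [← intervalIntegral.integral_const_mul,
      ← intervalIntegral.integral_add (hg0 _ _ _) ((hgc _ _ _ _).const_mul _)]
    apply intervalIntegral.integral_mono_on hΘ (hcont _ _)
      ((hg0 _ _ _).add ((hgc _ _ _ _).const_mul _))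
    intro θ hθ
    exact (aux_pow_le (k := k) hs.le hs4 (hv4 θ)
      (aux_v_ge_beta (hΘ0.le.trans hθ.1) hθ.2)).trans (hK2 θ hθ.1 hθ.2)
  have i3 : ∫ θ in (Real.pi / 3)..Real.pi, F θ ≤ 2 * Real.pi / 3 * Real.exp (-(k * s)) := by
    have : ∫ θ in (Real.pi / 3)..Real.pi, Real.exp (-(k * s)) =
        2 * Real.pi / 3 * Real.exp (-(k * s)) := by
      rw [intervalIntegral.integral_const, smul_eq_mul]; ring
    rw [← this]
    apply intervalIntegral.integral_mono_on (by linarith) (hcont _ _) (by simp)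
    intro θ hθ
    have := aux_pow_le (k := k) hs.le hs4 (hv4 θ) (aux_v_ge_one hθ.1 hθ.2)
    rwa [mul_one] at this
  have i4 : ∫ θ in Θ..(Real.pi / 3), Real.exp (-(k * s * (9 / Real.pi ^ 2)) * (θ - Θ) ^ 2) ≤
      Real.sqrt (Real.pi / (k * s * (9 / Real.pi ^ 2))) / 2 := by
    rw [intervalIntegral.integral_comp_sub_right
      (fun t => Real.exp (-(k * s * (9 / Real.pi ^ 2)) * t ^ 2)) Θ, sub_self]
    exact aux_gauss_le (by positivity) (by linarith)
  have i5 : ∫ θ in (0 : ℝ)..(Real.pi / 3), Real.exp (-(k * s * Real.cos Θ) * θ ^ 2) ≤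
      Real.sqrt (Real.pi / (k * s * Real.cos Θ)) / 2 :=
    aux_gauss_le (by positivity) (by positivity)
  have s1 := intervalIntegral.integral_add_adjacent_intervals (hcont 0 Θ) (hcont Θ (Real.pi / 3))
  have s2 := intervalIntegral.integral_add_adjacent_intervals (hcont 0 (Real.pi / 3))
    (hcont (Real.pi / 3) Real.pi)
  have s3 := intervalIntegral.integral_add_adjacent_intervals
    (hg0 (k * s * Real.cos Θ) 0 Θ) (hg0 (k * s * Real.cos Θ) Θ (Real.pi / 3))
  have i6 := mul_le_mul_of_nonneg_left i4 hK0
  have tot : ∫ θ in (0 : ℝ)..Real.pi, F θ ≤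
      Real.sqrt (Real.pi / (k * s * Real.cos Θ)) / 2 +
      K * (Real.sqrt (Real.pi / (k * s * (9 / Real.pi ^ 2))) / 2) +
      2 * Real.pi / 3 * Real.exp (-(k * s)) := by linarith
  have hsu : 0 < Real.sqrt (k * s) := Real.sqrt_pos.2 hu
  have hsp : 0 < Real.sqrt Real.pi := Real.sqrt_pos.2 hpi
  have hsc : 0 < Real.sqrt (Real.cos Θ) := Real.sqrt_pos.2 hcp
  have hsk : 1 ≤ Real.sqrt k := Real.one_le_sqrt.2 hk1
  have hsp2 : Real.sqrt Real.pi ≤ 2 := Real.sqrt_le_iff.2 ⟨by norm_num, by linarith⟩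
  have hsps : Real.sqrt Real.pi ^ 2 = Real.pi := Real.sq_sqrt hpi.le
  have e1 : Real.sqrt (k * s / Real.pi) = Real.sqrt (k * s) / Real.sqrt Real.pi :=
    Real.sqrt_div hu.le _
  have e2 : Real.sqrt (Real.pi / (k * s * Real.cos Θ)) =
      Real.sqrt Real.pi / (Real.sqrt (k * s) * Real.sqrt (Real.cos Θ)) := by
    rw [Real.sqrt_div hpi.le, Real.sqrt_mul hu.le]
  have e3 : Real.sqrt (Real.pi / (k * s * (9 / Real.pi ^ 2))) =
      Real.sqrt Real.pi / (Real.sqrt (k * s) * (3 / Real.pi)) := by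
    rw [Real.sqrt_div hpi.le, Real.sqrt_mul hu.le]
    have : 9 / Real.pi ^ 2 = (3 / Real.pi) ^ 2 := by ring
    rw [this, Real.sqrt_sq (by positivity)]
  have e4 : Real.sqrt (Real.pi * k) = Real.sqrt Real.pi * Real.sqrt k := Real.sqrt_mul hpi.le _
  have hsus : Real.sqrt (k * s) ≤ Real.sqrt k / 2 := by
    rw [Real.sqrt_mul hk0.le]
    have : Real.sqrt s ≤ 1 / 2 := Real.sqrt_le_iff.2 ⟨by norm_num, by linarith⟩
    nlinarith
  have hexp : Real.exp (-(9 / Real.pi ^ 2) * (k * s) * Θ ^ 2) ≤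
      Real.exp (-(9 / Real.pi ^ 2) * k * T ^ 2) := by
    apply Real.exp_le_exp.2
    have h1 : T ^ 2 ≤ (Θ * Real.sqrt s) ^ 2 := by gcongr
    rw [mul_pow, Real.sq_sqrt hs.le] at h1
    have h2 : 9 / Real.pi ^ 2 * k * T ^ 2 ≤ 9 / Real.pi ^ 2 * k * (Θ ^ 2 * s) := by gcongr
    linarith
  have b1 : Real.pi / 3 * K ≤ 2 / 3 * (Real.sqrt Real.pi * Real.sqrt k) * K := by
    apply mul_le_mul_of_nonneg_right _ hK0
    have c1 : Real.sqrt Real.pi * 1 ≤ Real.sqrt Real.pi * Real.sqrt k := by gcongr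
    have c2 : Real.sqrt Real.pi * Real.sqrt Real.pi ≤ Real.sqrt Real.pi * 2 := by gcongr
    rw [← sq, hsps] at c2
    linarith
  have b2 : Real.sqrt (k * s) / Real.sqrt Real.pi * (4 * Real.pi / 3) ≤
      2 / 3 * (Real.sqrt Real.pi * Real.sqrt k) := by
    have : Real.sqrt (k * s) / Real.sqrt Real.pi * (4 * Real.pi / 3) =
        4 / 3 * Real.sqrt (k * s) * Real.sqrt Real.pi := by
      nth_rewrite 2 [← hsps]; field_simp
    rw [this]
    have c1 : Real.sqrt (k * s) * Real.sqrt Real.pi ≤ Real.sqrt k / 2 * Real.sqrt Real.pi := by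
      gcongr
    linarith
  have b3 := mul_le_mul_of_nonneg_right b2 (Real.exp_pos (-(k * s))).le
  have b4 := mul_le_mul_of_nonneg_left (hK1.trans hexp)
    (by positivity : 0 ≤ 2 / 3 * (Real.sqrt Real.pi * Real.sqrt k))
  calc _ ≤ Real.sqrt (k * s / Real.pi) * (2 * (Real.sqrt (Real.pi / (k * s * Real.cos Θ)) / 2 +
      K * (Real.sqrt (Real.pi / (k * s * (9 / Real.pi ^ 2))) / 2) +
      2 * Real.pi / 3 * Real.exp (-(k * s)))) := by gcongr
    _ = (Real.sqrt (Real.cos Θ))⁻¹ + Real.pi / 3 * K +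
        Real.sqrt (k * s) / Real.sqrt Real.pi * (4 * Real.pi / 3) * Real.exp (-(k * s)) := by
      rw [e1, e2, e3]
      field_simp
      ring
    _ ≤ _ := by rw [e4]; linarith

/-- Bounds for the normalized `θ`-integral under the assumptions `Θ ∈ (0, π/3]`,
`r/γ ∈ [1/A, A]`, with `T = Θ√A/(1+A)` and `A₁ = √(π/(k r γ)) (r+γ)^{2k+1}`:
`(cos Θ)^{1/2}(1 - e^{-kT²/2}/(T√(2πk))) ≤ (1/A₁) ∫_{-π}^π (r²+γ²+2γr cos θ)^k dθ
  ≤ (cos Θ)^{-1/2} + (2/3)√(πk) e^{-(9/π²)kT²}`. -/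
theorem theta_integral_uniform_bounds (k : ℕ) (hk : 1 ≤ k) (r γ A Θ : ℝ)
    (hr : 0 < r) (hγ : 0 < γ) (hA : 1 < A) (hΘ : Θ ∈ Set.Ioc 0 (Real.pi / 3))
    (hrγ : r / γ ∈ Set.Icc (1 / A) A) :
    Real.sqrt (Real.cos Θ) *
        (1 - 1 / (Θ * Real.sqrt A / (1 + A) * Real.sqrt (2 * Real.pi * k)) *
          Real.exp (-(k : ℝ) * (Θ * Real.sqrt A / (1 + A)) ^ 2 / 2)) ≤
      1 / (Real.sqrt (Real.pi / (k * r * γ)) * (r + γ) ^ (2 * k + 1)) *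
        ∫ θ in (-Real.pi)..Real.pi, (r ^ 2 + γ ^ 2 + 2 * γ * r * Real.cos θ) ^ k ∧
    1 / (Real.sqrt (Real.pi / (k * r * γ)) * (r + γ) ^ (2 * k + 1)) *
        (∫ θ in (-Real.pi)..Real.pi, (r ^ 2 + γ ^ 2 + 2 * γ * r * Real.cos θ) ^ k) ≤
      (Real.sqrt (Real.cos Θ))⁻¹ +
        2 / 3 * Real.sqrt (Real.pi * k) *
          Real.exp (-(9 / Real.pi ^ 2) * k * (Θ * Real.sqrt A / (1 + A)) ^ 2) := by
  have hpi := Real.pi_pos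
  have hk0 : (0 : ℝ) < k := by exact_mod_cast hk
  have hA0 : 0 < A := by linarith
  set s := r * γ / (r + γ) ^ 2 with hsdef
  have hrg : 0 < r + γ := by linarith
  have hs : 0 < s := by positivity
  have hs4 : s ≤ 1 / 4 := by
    rw [hsdef, div_le_iff₀ (by positivity)]; nlinarith [sq_nonneg (r - γ)]
  have hT0 : 0 < Θ * Real.sqrt A / (1 + A) := by
    have := hΘ.1
    positivity
  have hAs : A / (1 + A) ^ 2 ≤ s := by
    obtain ⟨h1, h2⟩ := hrγ
    rw [div_le_div_iff₀ hA0 hγ] at h1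
    rw [div_le_iff₀ hγ] at h2
    rw [hsdef, div_le_div_iff₀ (by positivity) (by positivity)]
    nlinarith [mul_nonneg (sub_nonneg.2 h1) (sub_nonneg.2 h2)]
  have hT : Θ * Real.sqrt A / (1 + A) ≤ Θ * Real.sqrt s := by
    have : Real.sqrt A / (1 + A) ≤ Real.sqrt s := by
      apply Real.le_sqrt_of_sq_le
      rw [div_pow, Real.sq_sqrt hA0.le]; exact hAs
    rw [mul_div_assoc]
    exact mul_le_mul_of_nonneg_left this hΘ.1.le
  have hpt : ∀ θ : ℝ, (r ^ 2 + γ ^ 2 + 2 * γ * r * Real.cos θ) ^ k =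
      (r + γ) ^ (2 * k) * (1 - s * (2 * (1 - Real.cos θ))) ^ k := by
    intro θ
    rw [pow_mul, ← mul_pow]
    congr 1
    rw [hsdef]; field_simp; ring
  have hI : 1 / (Real.sqrt (Real.pi / (k * r * γ)) * (r + γ) ^ (2 * k + 1)) *
        (∫ θ in (-Real.pi)..Real.pi, (r ^ 2 + γ ^ 2 + 2 * γ * r * Real.cos θ) ^ k) =
      Real.sqrt (k * s / Real.pi) *
      (2 * ∫ θ in (0 : ℝ)..Real.pi, (1 - s * (2 * (1 - Real.cos θ))) ^ k) := by
    simp_rw [hpt]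
    rw [intervalIntegral.integral_const_mul]
    have hcont : ∀ a b : ℝ, IntervalIntegrable
        (fun θ => (1 - s * (2 * (1 - Real.cos θ))) ^ k) volume a b := by
      intro a b; apply Continuous.intervalIntegrable; fun_prop
    have h1 := intervalIntegral.integral_add_adjacent_intervals
      (hcont (-Real.pi) 0) (hcont 0 Real.pi)
    have h2 := intervalIntegral.integral_comp_neg (a := 0) (b := Real.pi)
      (fun θ => (1 - s * (2 * (1 - Real.cos θ))) ^ k)
    simp only [Real.cos_neg, neg_zero] at h2
    rw [← h1, ← h2, ← two_mul]
    have e1 : Real.sqrt (k * s / Real.pi) =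
        1 / (Real.sqrt (Real.pi / (k * r * γ)) * (r + γ)) := by
      have : k * s / Real.pi = 1 / (Real.pi / (k * r * γ) * (r + γ) ^ 2) := by
        rw [hsdef]; field_simp
      rw [this, Real.sqrt_div zero_le_one, Real.sqrt_one, Real.sqrt_mul (by positivity),
        Real.sqrt_sq hrg.le]
    have hq : 0 < Real.sqrt (Real.pi / (k * r * γ)) := by positivity
    rw [e1, pow_succ]
    generalize ∫ θ in (0 : ℝ)..Real.pi, (1 - s * (2 * (1 - Real.cos θ))) ^ k = J
    generalize Real.sqrt (Real.pi / (k * r * γ)) = q at *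
    field_simp
  rw [hI]
  exact ⟨aux_lower hk hs hs4 hΘ.1 hΘ.2 hT0 hT, aux_upper hk hs hs4 hΘ.1 hΘ.2 hT0 hT⟩
end
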